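/- arXiv:2007.05251 — 4 statements merged into one kernel-verified Lean document; each statement's English description precedes it below -/
import Mathlib

section
/- There exists an absolute constant c > 0 with the following property. Let R be a finite valuation ring of order q^r in which 6 is a unit (i.e., the residue characteristic is neither 2 nor 3), and let A ⊆ R be a nonempty subset satisfying |A+A|^4 ≥ q^{3r−1}·|A|. Then max{|A+A|, |A^3 + A^3|} ≥ c·q^{r/10}·|A|^{9/10}. -/
open Finset Pointwise

lemma aux_corr {K : Type} [Field K] [Fintype K] [DecidableEq K] (hK : ringChar K ≠ 2)
    (δ : K) (hδ : δ ≠ 0) :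
    ∑ x : K, quadraticChar K x * quadraticChar K (x + δ) = -1 := by
  have h1 := jacobiSum_nontrivial_inv (quadraticChar_ne_one hK)
  rw [(quadraticChar_isQuadratic K).inv] at h1
  have h2 : ∑ x : K, quadraticChar K x * quadraticChar K (x + δ)
      = ∑ y : K, quadraticChar K (-δ * y) * quadraticChar K (-δ * y + δ) :=
    (Equiv.sum_comp (Equiv.mulLeft₀ (-δ) (neg_ne_zero.mpr hδ))
      (fun x => quadraticChar K x * quadraticChar K (x + δ))).symm
  have h3 : ∀ y : K, quadraticChar K (-δ * y) * quadraticChar K (-δ * y + δ)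
      = quadraticChar K (-1) * (quadraticChar K y * quadraticChar K (1 - y)) := by
    intro y
    have e1 : -δ * y = (-1) * δ * y := by ring
    have e2 : -δ * y + δ = δ * (1 - y) := by ring
    rw [e2, e1]
    simp only [map_mul]
    have := quadraticChar_sq_one hδ
    linear_combination (quadraticChar K (-1) * quadraticChar K y * quadraticChar K (1 - y)) * this
  rw [h2, Finset.sum_congr rfl (fun y _ => h3 y), ← Finset.mul_sum]
  change _ * jacobiSum (quadraticChar K) (quadraticChar K) = _
  rw [h1]
  have := quadraticChar_sq_one (F := K) (a := -1) (by simp)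
  linear_combination -this

lemma aux_corr2 {K : Type} [Field K] [Fintype K] [DecidableEq K] (hK : ringChar K ≠ 2)
    (l m w w' : K) (hl : l ≠ 0) :
    ∑ z : K, ((quadraticChar K (l * (z - w) + m) : ℤ) : ℝ) *
      ((quadraticChar K (l * (z - w') + m) : ℤ) : ℝ) ≤
      if w = w' then (Fintype.card K : ℝ) else 0 := by
  split_ifs with h
  · subst h
    have : ∀ z ∈ (univ : Finset K), ((quadraticChar K (l * (z - w) + m) : ℤ) : ℝ) *
      ((quadraticChar K (l * (z - w) + m) : ℤ) : ℝ) ≤ 1 := by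
      intro z _
      rcases quadraticChar_isQuadratic K (l * (z - w) + m) with h | h | h <;> rw [h] <;> norm_num
    refine (Finset.sum_le_sum this).trans ?_
    simp
  · have h2 := ((Equiv.mulLeft₀ l hl).trans (Equiv.addRight (m - l * w))).sum_comp
      (fun x => quadraticChar K x * quadraticChar K (x + l * (w - w')))
    rw [aux_corr hK _ (mul_ne_zero hl (sub_ne_zero.mpr h))] at h2
    have h3 : ∑ z : K, (quadraticChar K (l * (z - w) + m)) *
      (quadraticChar K (l * (z - w') + m)) = -1 := by
      rw [← h2]
      refine Finset.sum_congr rfl fun z _ => ?_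
      simp only [Equiv.trans_apply, Equiv.mulLeft₀_apply, Equiv.coe_addRight]
      congr 2 <;> ring
    have h4 : ∑ z : K, ((quadraticChar K (l * (z - w) + m) : ℤ) : ℝ) *
      ((quadraticChar K (l * (z - w') + m) : ℤ) : ℝ) = -1 := by exact_mod_cast h3
    rw [h4]; norm_num

lemma aux_bilin {K : Type} [Field K] [Fintype K] [DecidableEq K] (hK : ringChar K ≠ 2)
    (l m : K) (hl : l ≠ 0) (F : K → ℝ) (hF : ∀ z, 0 ≤ F z) :
    ∑ z, ∑ w, F z * F w * ((quadraticChar K (l * (z - w) + m) : ℤ) : ℝ) ≤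
      √(Fintype.card K : ℝ) * ∑ z, F z ^ 2 := by
  set X : K → K → ℝ := fun z w => ((quadraticChar K (l * (z - w) + m) : ℤ) : ℝ) with hX
  have hE : 0 ≤ ∑ z, F z ^ 2 := Finset.sum_nonneg fun _ _ => sq_nonneg _
  have h1 : ∑ z, ∑ w, F z * F w * X z w = ∑ z, F z * ∑ w, F w * X z w := by
    simp only [Finset.mul_sum, mul_assoc]
  have h2 : ∑ z, (∑ w, F w * X z w) ^ 2 ≤ Fintype.card K * ∑ z, F z ^ 2 := by
    have : ∑ z, (∑ w, F w * X z w) ^ 2 = ∑ w, ∑ w', F w * F w' * ∑ z, X z w * X z w' := by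
      simp only [sq, Finset.sum_mul_sum]
      rw [Finset.sum_comm]
      refine Finset.sum_congr rfl fun w _ => ?_
      rw [Finset.sum_comm]
      refine Finset.sum_congr rfl fun w' _ => ?_
      rw [Finset.mul_sum]
      refine Finset.sum_congr rfl fun z _ => by ring
    rw [this]
    calc _ ≤ ∑ w, ∑ w', F w * F w' * (if w = w' then (Fintype.card K : ℝ) else 0) := by
          refine Finset.sum_le_sum fun w _ => Finset.sum_le_sum fun w' _ => ?_
          exact mul_le_mul_of_nonneg_left (aux_corr2 hK l m w w' hl) (mul_nonneg (hF _) (hF _))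
      _ = _ := by
          simp only [mul_ite, mul_zero, Finset.sum_ite_eq, Finset.mem_univ, if_true]
          rw [Finset.mul_sum]
          refine Finset.sum_congr rfl fun z _ => by ring
  rw [h1]
  refine abs_le_of_sq_le_sq' ?_ (by positivity) |>.2
  calc _ ≤ (∑ z, F z ^ 2) * ∑ z, (∑ w, F w * X z w) ^ 2 := Finset.sum_mul_sq_le_sq_mul_sq _ _ _
    _ ≤ (∑ z, F z ^ 2) * (Fintype.card K * ∑ z, F z ^ 2) := by gcongr
    _ = _ := by rw [mul_pow, Real.sq_sqrt (by positivity)]; ring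

/-- The fibres of a surjective ring hom all have the same size. -/
lemma aux_fiber {R K : Type} [CommRing R] [Fintype R] [Field K] [Fintype K] [DecidableEq K]
    (π : R →+* K) (hπ : Function.Surjective π) :
    ∃ L : ℕ, (∀ z, #{x | π x = z} = L) ∧ Fintype.card R = Fintype.card K * L := by
  refine ⟨#{x | π x = 0}, ?_, ?_⟩
  · intro z
    exact AddMonoidHom.card_fiber_eq_of_mem_range (π : R →+ K) (hπ z) (hπ 0)
  · have h := Finset.card_eq_sum_card_fiberwise (f := π) (s := univ) (t := univ) (by simp)
    rw [← Finset.card_univ, h]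
    have h' : ∀ z ∈ (univ : Finset K), #{x | π x = z} = #{x | π x = 0} := fun z _ =>
      AddMonoidHom.card_fiber_eq_of_mem_range (π : R →+ K) (hπ z) (hπ 0)
    rw [Finset.sum_congr rfl h']
    simp

lemma aux_cube_field {K : Type} [Field K] [Fintype K] [DecidableEq K] (w : K) :
    #{z : K | z ^ 3 = w} ≤ 3 := by
  refine le_trans ?_ (Polynomial.card_nthRoots 3 w)
  refine le_trans (Finset.card_le_card ?_) (Multiset.toFinset_card_le _)
  intro z hz
  simp only [Finset.mem_filter, Finset.mem_univ, true_and] at hz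
  simp [Polynomial.mem_nthRoots, hz]

lemma aux_cube_res {R K : Type} [CommRing R] [Fintype R] [Field K] [Fintype K] [DecidableEq K]
    (π : R →+* K) (L : ℕ) (hL : ∀ z, #{x | π x = z} = L) (w : K) :
    #{c : R | π c ^ 3 = w} ≤ 3 * L := by
  have h := Finset.card_eq_sum_card_fiberwise (f := π) (s := {c : R | π c ^ 3 = w})
    (t := {z : K | z ^ 3 = w}) (by intro x; simp)
  rw [h]
  calc _ ≤ ∑ z ∈ {z : K | z ^ 3 = w}, L := by
        refine Finset.sum_le_sum fun z _ => ?_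
        rw [← hL z]
        apply Finset.card_le_card
        intro x; simp
    _ ≤ _ := by
        rw [Finset.sum_const, smul_eq_mul]
        exact Nat.mul_le_mul_right _ (aux_cube_field w)

lemma aux_cube_unit {R K : Type} [CommRing R] [Fintype R] [DecidableEq R]
    [Field K] [Fintype K] [DecidableEq K]
    (π : R →+* K) (hu : ∀ x, π x ≠ 0 → IsUnit x) (h6 : IsUnit (6 : R)) (v : R) :
    #{c : R | π c ≠ 0 ∧ c ^ 3 = v} ≤ 3 := by
  refine le_trans ?_ (aux_cube_field (π v))
  refine Finset.card_le_card_of_injOn π ?_ ?_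
  · intro c hc
    simp only [Finset.coe_filter, Finset.mem_univ, true_and, Set.mem_ofPred_eq] at hc ⊢
    rw [← hc.2, map_pow]
  · intro c hc d hd hcd
    simp only [Finset.coe_filter, Finset.mem_univ, true_and, Set.mem_ofPred_eq] at hc hd
    have h3 : (3 : K) ≠ 0 := by
      intro h
      have := (h6.map π).ne_zero
      apply this
      have e : (6 : R) = 2 * 3 := by norm_num
      rw [e, map_mul, map_ofNat, map_ofNat, h, mul_zero]
    have h1 : IsUnit (c ^ 2 + c * d + d ^ 2) := by
      apply hu
      simp only [map_add, map_mul, map_pow, ← hcd]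
      have : π c ^ 2 + π c * π c + π c ^ 2 = 3 * π c ^ 2 := by ring
      rw [this]
      exact mul_ne_zero h3 (pow_ne_zero _ hc.1)
    have h2 : (c ^ 2 + c * d + d ^ 2) * (c - d) = 0 := by
      have := hc.2.trans hd.2.symm
      linear_combination this
    exact sub_eq_zero.mp ((h1.mul_right_eq_zero).mp h2)

/-- Solutions `x` away from the critical point. -/
lemma aux_sqrt {R K : Type} [CommRing R] [Fintype R] [DecidableEq R]
    [Field K] [Fintype K] [DecidableEq K]
    (π : R →+* K) (hu : ∀ x, π x ≠ 0 → IsUnit x) (h6 : IsUnit (6 : R))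
    (b b' c c' : R) (hb : π (b' - b) ≠ 0) :
    ((#{x : R | π (2 * x - b - b') ≠ 0 ∧ (x - b) ^ 3 + c ^ 3 = (x - b') ^ 3 + c' ^ 3} : ℕ) : ℝ) ≤
      1 + ((quadraticChar K (3 * π (b' - b) * (4 * (π c' ^ 3 - π c ^ 3) - π (b' - b) ^ 3)) : ℤ) : ℝ)
      := by
  have h6' : (2 : K) * 3 ≠ 0 := by
    have := (h6.map π).ne_zero
    have e : (6 : R) = 2 * 3 := by norm_num
    rwa [e, map_mul, map_ofNat, map_ofNat] at this
  have h3 : (3 : K) ≠ 0 := right_ne_zero_of_mul h6'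
  have h2 : (2 : K) ≠ 0 := left_ne_zero_of_mul h6'
  have h2u : IsUnit (2 : R) := hu _ (by rwa [map_ofNat])
  set T := ({x : R | π (2 * x - b - b') ≠ 0 ∧
    (x - b) ^ 3 + c ^ 3 = (x - b') ^ 3 + c' ^ 3} : Finset R) with hT
  rcases T.eq_empty_or_nonempty with h | ⟨x, hx⟩
  · rw [h]
    rcases quadraticChar_isQuadratic K
      (3 * π (b' - b) * (4 * (π c' ^ 3 - π c ^ 3) - π (b' - b) ^ 3)) with h | h | h <;>
      rw [h] <;> norm_num
  · have key : ∀ y ∈ T, 3 * (b' - b) * (2 * y - b - b') ^ 2 =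
        4 * (c' ^ 3 - c ^ 3) - (b' - b) ^ 3 := by
      intro y hy
      simp only [hT, Finset.mem_filter, Finset.mem_univ, true_and] at hy
      linear_combination 4 * hy.2
    have hx0 : π (2 * x - b - b') ≠ 0 := by
      simp only [hT, Finset.mem_filter, Finset.mem_univ, true_and] at hx
      exact hx.1
    have hsq : 3 * π (b' - b) * (4 * (π c' ^ 3 - π c ^ 3) - π (b' - b) ^ 3) =
        (3 * π (b' - b) * π (2 * x - b - b')) ^ 2 := by
      have := congrArg π (key x hx)
      simp only [map_mul, map_sub, map_pow, map_ofNat] at this ⊢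
      linear_combination -3 * (π b' - π b) * this
    rw [hsq, quadraticChar_sq_one' (mul_ne_zero (mul_ne_zero h3 hb) hx0)]
    have hsub : T ⊆ {x, b + b' - x} := by
      intro y hy
      have h3h : IsUnit (3 * (b' - b)) := hu _ (by
        rw [map_mul]; exact mul_ne_zero (by rwa [map_ofNat]) hb)
      have e := (key y hy).trans (key x hx).symm
      have e2 := h3h.mul_left_cancel e
      have e3 : (y - x) * (y - (b + b' - x)) = 0 := by
        have h4u : IsUnit (2 * 2 : R) := h2u.mul h2u
        apply (h4u.mul_right_eq_zero).mp
        linear_combination e2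
      have hne : π (y - x) ≠ 0 ∨ π (y - (b + b' - x)) ≠ 0 := by
        by_contra hcon
        push Not at hcon
        apply hx0
        have := hcon.2
        have h' := hcon.1
        simp only [map_mul, map_sub, map_add, map_ofNat] at this h' ⊢
        linear_combination this - h'
      simp only [Finset.mem_insert, Finset.mem_singleton]
      rcases hne with hne | hne
      · right
        exact sub_eq_zero.mp (((hu _ hne).mul_right_eq_zero).mp e3)
      · left
        exact sub_eq_zero.mp (((hu _ hne).mul_left_eq_zero).mp e3)
    have hc : #T ≤ 2 := (Finset.card_le_card hsub).trans Finset.card_le_two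
    have : ((#T : ℕ) : ℝ) ≤ 2 := by exact_mod_cast hc
    push_cast
    linarith

/-- The character sum over pairs. -/
lemma aux_charsum {R K : Type} [CommRing R] [Fintype R] [DecidableEq R]
    [Field K] [Fintype K] [DecidableEq K]
    (π : R →+* K) (hK : ringChar K ≠ 2) (L : ℕ) (hL : ∀ z, #{x | π x = z} = L)
    (l m : K) (hl : l ≠ 0) (B : Finset R) :
    ∑ c ∈ B, ∑ c' ∈ B, ((quadraticChar K (l * (π c ^ 3 - π c' ^ 3) + m) : ℤ) : ℝ) ≤
      √(Fintype.card K : ℝ) * (3 * L * #B) := by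
  set F : K → ℝ := fun z => (#{c ∈ B | π c ^ 3 = z} : ℝ) with hF
  have hsum : ∀ g : K → ℝ, ∑ c ∈ B, g (π c ^ 3) = ∑ z, F z * g z := by
    intro g
    rw [← Finset.sum_fiberwise B (fun c => π c ^ 3)]
    refine Finset.sum_congr rfl fun z _ => ?_
    rw [Finset.sum_congr rfl (g := fun _ => g z)]
    · simp [hF]
    · intro c hc
      rw [(Finset.mem_filter.mp hc).2]
  have h1 : ∑ c ∈ B, ∑ c' ∈ B, ((quadraticChar K (l * (π c ^ 3 - π c' ^ 3) + m) : ℤ) : ℝ)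
      = ∑ z, ∑ w, F z * F w * ((quadraticChar K (l * (z - w) + m) : ℤ) : ℝ) := by
    rw [hsum (fun z => ∑ c' ∈ B, ((quadraticChar K (l * (z - π c' ^ 3) + m) : ℤ) : ℝ))]
    refine Finset.sum_congr rfl fun z _ => ?_
    rw [hsum (fun w => ((quadraticChar K (l * (z - w) + m) : ℤ) : ℝ)), Finset.mul_sum]
    refine Finset.sum_congr rfl fun w _ => by ring
  rw [h1]
  refine (aux_bilin hK l m hl F (fun z => by positivity)).trans ?_
  gcongr
  have hFle : ∀ z, F z ≤ 3 * L := by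
    intro z
    have : #{c ∈ B | π c ^ 3 = z} ≤ 3 * L := by
      refine le_trans (Finset.card_le_card ?_) (aux_cube_res π L hL z)
      intro x; simp
    simp only [hF]
    exact_mod_cast this
  have hFs : ∑ z, F z = #B := by
    have := hsum (fun _ => 1)
    simp only [mul_one] at this
    rw [← this]; simp
  calc ∑ z, F z ^ 2 ≤ ∑ z, 3 * L * F z := by
        refine Finset.sum_le_sum fun z _ => ?_
        rw [sq]
        exact mul_le_mul_of_nonneg_right (hFle z) (by positivity)
    _ = _ := by rw [← Finset.mul_sum, hFs]

lemma aux_pair {R K : Type} [CommRing R] [Fintype R] [DecidableEq R]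
    [Field K] [Fintype K] [DecidableEq K]
    (π : R →+* K) (hu : ∀ x, π x ≠ 0 → IsUnit x) (h6 : IsUnit (6 : R))
    (L : ℕ) (hL : ∀ z, #{x | π x = z} = L)
    (B : Finset R) (hB : ∀ c ∈ B, π c ≠ 0) (b b' : R) (hb : π (b' - b) ≠ 0) :
    ∑ c ∈ B, ∑ c' ∈ B, ((#{x : R | (x - b) ^ 3 + c ^ 3 = (x - b') ^ 3 + c' ^ 3} : ℕ) : ℝ) ≤
      (#B : ℝ) ^ 2 + √(Fintype.card K : ℝ) * (3 * L * #B) + 3 * L * #B := by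
  have h6' : (2 : K) * 3 ≠ 0 := by
    have := (h6.map π).ne_zero
    have e : (6 : R) = 2 * 3 := by norm_num
    rwa [e, map_mul, map_ofNat, map_ofNat] at this
  have h3 : (3 : K) ≠ 0 := right_ne_zero_of_mul h6'
  have h2 : (2 : K) ≠ 0 := left_ne_zero_of_mul h6'
  have hK : ringChar K ≠ 2 := by
    intro h
    apply h2
    have := ringChar.Nat.cast_ringChar (R := K)
    rw [h] at this
    exact_mod_cast this
  have hsplit : ∀ c c' : R,
      ((#{x : R | (x - b) ^ 3 + c ^ 3 = (x - b') ^ 3 + c' ^ 3} : ℕ) : ℝ) ≤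
      (1 + ((quadraticChar K (3 * π (b' - b) *
        (4 * (π c' ^ 3 - π c ^ 3) - π (b' - b) ^ 3)) : ℤ) : ℝ)) +
      ((#{x : R | π (2 * x - b - b') = 0 ∧
        (x - b) ^ 3 + c ^ 3 = (x - b') ^ 3 + c' ^ 3} : ℕ) : ℝ) := by
    intro c c'
    refine le_trans ?_ (add_le_add_left (aux_sqrt π hu h6 b b' c c' hb) _)
    rw [← Nat.cast_add, Nat.cast_le]
    refine le_trans (Finset.card_le_card ?_) (Finset.card_union_le _ _)
    intro x hx
    simp only [Finset.mem_filter, Finset.mem_univ, true_and, Finset.mem_union] at hx ⊢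
    tauto
  have hcrit : ∑ c ∈ B, ∑ c' ∈ B, ((#{x : R | π (2 * x - b - b') = 0 ∧
        (x - b) ^ 3 + c ^ 3 = (x - b') ^ 3 + c' ^ 3} : ℕ) : ℝ) ≤ 3 * L * #B := by
    have : ∀ c ∈ B, ∑ c' ∈ B, (#{x : R | π (2 * x - b - b') = 0 ∧
        (x - b) ^ 3 + c ^ 3 = (x - b') ^ 3 + c' ^ 3}) ≤ 3 * L := by
      intro c _
      have e := Finset.sum_card_bipartiteAbove_eq_sum_card_bipartiteBelow
        (s := B) (t := ({x : R | π (2 * x - b - b') = 0} : Finset R))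
        (fun c' x => (x - b) ^ 3 + c ^ 3 = (x - b') ^ 3 + c' ^ 3)
      simp only [Finset.bipartiteAbove, Finset.bipartiteBelow, Finset.filter_filter] at e
      rw [e]
      calc _ ≤ ∑ x ∈ ({x : R | π (2 * x - b - b') = 0} : Finset R), 3 := by
            refine Finset.sum_le_sum fun x _ => ?_
            refine le_trans (Finset.card_le_card ?_)
              (aux_cube_unit π hu h6 ((x - b) ^ 3 + c ^ 3 - (x - b') ^ 3))
            intro c' hc'
            simp only [Finset.mem_filter, Finset.mem_univ, true_and] at hc' ⊢
            exact ⟨hB c' hc'.1, by linear_combination -hc'.2⟩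
        _ ≤ 3 * L := by
            rw [Finset.sum_const, smul_eq_mul, mul_comm, ← hL ((π b + π b') / 2)]
            apply Nat.mul_le_mul_left
            apply Finset.card_le_card
            intro x hx
            simp only [Finset.mem_filter, Finset.mem_univ, true_and, map_sub, map_mul,
              map_ofNat] at hx ⊢
            field_simp
            linear_combination hx
    have h := Finset.sum_le_sum this
    rw [Finset.sum_const, smul_eq_mul, mul_comm] at h
    exact_mod_cast h
  have hchar := aux_charsum π hK L hL (-(12 * π (b' - b))) (-(3 * π (b' - b) ^ 4))
    (by
      have : (12 : K) = 2 * 3 * 2 := by norm_num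
      rw [this]
      exact neg_ne_zero.mpr (mul_ne_zero (mul_ne_zero h6' h2) hb)) B
  have hchar' : ∑ c ∈ B, ∑ c' ∈ B, ((quadraticChar K (3 * π (b' - b) *
        (4 * (π c' ^ 3 - π c ^ 3) - π (b' - b) ^ 3)) : ℤ) : ℝ) ≤
        √(Fintype.card K : ℝ) * (3 * L * #B) := by
    refine le_trans (le_of_eq ?_) hchar
    refine Finset.sum_congr rfl fun c _ => Finset.sum_congr rfl fun c' _ => ?_
    congr 3
    ring
  calc _ ≤ ∑ c ∈ B, ∑ c' ∈ B, ((1 + ((quadraticChar K (3 * π (b' - b) *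
        (4 * (π c' ^ 3 - π c ^ 3) - π (b' - b) ^ 3)) : ℤ) : ℝ)) +
      ((#{x : R | π (2 * x - b - b') = 0 ∧
        (x - b) ^ 3 + c ^ 3 = (x - b') ^ 3 + c' ^ 3} : ℕ) : ℝ)) :=
        Finset.sum_le_sum fun c _ => Finset.sum_le_sum fun c' _ => hsplit c c'
    _ ≤ _ := by
        simp only [Finset.sum_add_distrib, Finset.sum_const, nsmul_eq_mul, mul_one]
        rw [← sq]
        gcongr

lemma aux_pair0 {R K : Type} [CommRing R] [Fintype R] [DecidableEq R]
    [Field K] [Fintype K] [DecidableEq K]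
    (π : R →+* K) (hu : ∀ x, π x ≠ 0 → IsUnit x) (h6 : IsUnit (6 : R))
    (B : Finset R) (hB : ∀ c ∈ B, π c ≠ 0) (b b' : R) :
    ∑ c ∈ B, ∑ c' ∈ B, ((#{x : R | (x - b) ^ 3 + c ^ 3 = (x - b') ^ 3 + c' ^ 3} : ℕ) : ℝ) ≤
      3 * Fintype.card R * #B := by
  have : ∀ c ∈ B, ∑ c' ∈ B, (#{x : R |
        (x - b) ^ 3 + c ^ 3 = (x - b') ^ 3 + c' ^ 3}) ≤ 3 * Fintype.card R := by
      intro c _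
      have e := Finset.sum_card_bipartiteAbove_eq_sum_card_bipartiteBelow
        (s := B) (t := (univ : Finset R))
        (fun c' x => (x - b) ^ 3 + c ^ 3 = (x - b') ^ 3 + c' ^ 3)
      simp only [Finset.bipartiteAbove, Finset.bipartiteBelow] at e
      rw [e]
      calc _ ≤ ∑ x ∈ (univ : Finset R), 3 := by
            refine Finset.sum_le_sum fun x _ => ?_
            refine le_trans (Finset.card_le_card ?_)
              (aux_cube_unit π hu h6 ((x - b) ^ 3 + c ^ 3 - (x - b') ^ 3))
            intro c' hc'
            simp only [Finset.mem_filter, Finset.mem_univ, true_and] at hc' ⊢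
            exact ⟨hB c' hc'.1, by linear_combination -hc'.2⟩
        _ ≤ _ := by
            rw [Finset.sum_const, smul_eq_mul, mul_comm, Finset.card_univ]
  have h := Finset.sum_le_sum this
  rw [Finset.sum_const, smul_eq_mul, mul_comm] at h
  exact_mod_cast h

/-- Number of representations of the point `(x, y)`. -/
noncomputable def auxN {R : Type} [CommRing R] [DecidableEq R] (A B : Finset R) (x y : R) : ℝ :=
  ∑ b ∈ A, ∑ c ∈ B, if (x - b) ^ 3 + c ^ 3 = y then 1 else 0

lemma auxN_sum {R : Type} [CommRing R] [Fintype R] [DecidableEq R] (A B : Finset R) :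
    ∑ x, ∑ y, auxN A B x y = Fintype.card R * (#A * #B) := by
  have : ∀ x : R, ∑ y, auxN A B x y = #A * #B := by
    intro x
    simp only [auxN]
    rw [Finset.sum_comm]
    simp_rw [Finset.sum_comm (s := univ) (t := B)]
    simp
  simp [this]

lemma auxN_sq {R : Type} [CommRing R] [Fintype R] [DecidableEq R] (A B : Finset R) :
    ∑ x, ∑ y, auxN A B x y ^ 2 = ∑ b ∈ A, ∑ b' ∈ A, ∑ c ∈ B, ∑ c' ∈ B,
      ((#{x : R | (x - b) ^ 3 + c ^ 3 = (x - b') ^ 3 + c' ^ 3} : ℕ) : ℝ) := by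
  have hN : ∀ x y, auxN A B x y =
      ∑ p ∈ A ×ˢ B, if (x - p.1) ^ 3 + p.2 ^ 3 = y then 1 else 0 := by
    intro x y
    rw [Finset.sum_product]; rfl
  have h1 : ∀ x, ∑ y, auxN A B x y ^ 2 = ∑ p ∈ A ×ˢ B, ∑ p' ∈ A ×ˢ B,
      (if (x - p.1) ^ 3 + p.2 ^ 3 = (x - p'.1) ^ 3 + p'.2 ^ 3 then (1 : ℝ) else 0) := by
    intro x
    simp only [hN, sq, Finset.sum_mul_sum]
    rw [Finset.sum_comm]
    refine Finset.sum_congr rfl fun p _ => ?_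
    rw [Finset.sum_comm]
    refine Finset.sum_congr rfl fun p' _ => ?_
    rw [Finset.sum_eq_single ((x - p.1) ^ 3 + p.2 ^ 3)]
    · simp [eq_comm]
    · intro y _ hy
      simp [hy.symm]
    · simp
  simp only [h1]
  rw [Finset.sum_comm]
  simp_rw [Finset.sum_comm (s := univ) (t := A ×ˢ B)]
  simp only [Finset.sum_product]
  refine Finset.sum_congr rfl fun b _ => ?_
  rw [Finset.sum_comm]
  refine Finset.sum_congr rfl fun b' _ => Finset.sum_congr rfl fun c _ =>
    Finset.sum_congr rfl fun c' _ => ?_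
  simp

lemma aux_second {R K : Type} [CommRing R] [Fintype R] [DecidableEq R]
    [Field K] [Fintype K] [DecidableEq K]
    (π : R →+* K) (hu : ∀ x, π x ≠ 0 → IsUnit x) (h6 : IsUnit (6 : R))
    (L : ℕ) (hL : ∀ z, #{x | π x = z} = L)
    (A B : Finset R) (hB : ∀ c ∈ B, π c ≠ 0) :
    ∑ x, ∑ y, auxN A B x y ^ 2 ≤
      (#A : ℝ) ^ 2 * ((#B : ℝ) ^ 2 + √(Fintype.card K : ℝ) * (3 * L * #B) + 3 * L * #B)
      + #A * L * (3 * Fintype.card R * #B) := by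
  rw [auxN_sq]
  set X := ((#B : ℝ) ^ 2 + √(Fintype.card K : ℝ) * (3 * L * #B) + 3 * L * #B) with hX
  have hX0 : 0 ≤ X := by positivity
  have h1 : ∀ b ∈ A, ∑ b' ∈ A, ∑ c ∈ B, ∑ c' ∈ B,
      ((#{x : R | (x - b) ^ 3 + c ^ 3 = (x - b') ^ 3 + c' ^ 3} : ℕ) : ℝ) ≤
      #A * X + L * (3 * Fintype.card R * #B) := by
    intro b _
    calc _ ≤ ∑ b' ∈ A, (X + if π b' = π b then (3 * Fintype.card R * #B : ℝ) else 0) := by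
          refine Finset.sum_le_sum fun b' _ => ?_
          split_ifs with h
          · exact (aux_pair0 π hu h6 B hB b b').trans (by linarith)
          · rw [add_zero]
            exact aux_pair π hu h6 L hL B hB b b' (by rwa [map_sub, sub_ne_zero])
      _ ≤ _ := by
          rw [Finset.sum_add_distrib, Finset.sum_const, nsmul_eq_mul, ← Finset.sum_filter,
            Finset.sum_const, nsmul_eq_mul]
          gcongr
          rw [← hL (π b)]
          apply Finset.card_le_card
          intro x; simp
  refine (Finset.sum_le_sum h1).trans (le_of_eq ?_)
  rw [Finset.sum_const, nsmul_eq_mul]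
  ring

lemma aux_incidence {R : Type} [CommRing R] [Fintype R] [DecidableEq R] (A B : Finset R)
    (hBA : B ⊆ A) :
    (#A : ℝ) ^ 2 * #B ≤ ∑ p ∈ (A + A) ×ˢ
      (A.image (fun x => x ^ 3) + A.image (fun x => x ^ 3)), auxN A B p.1 p.2 := by
  have h : ∀ b ∈ A, ∀ c ∈ B, (#A : ℝ) ≤ ∑ p ∈ (A + A) ×ˢ
      (A.image (fun x => x ^ 3) + A.image (fun x => x ^ 3)),
      if (p.1 - b) ^ 3 + c ^ 3 = p.2 then (1 : ℝ) else 0 := by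
    intro b hb c hc
    rw [Finset.sum_boole, Nat.cast_le]
    refine Finset.card_le_card_of_injOn (fun a => (a + b, a ^ 3 + c ^ 3)) ?_ ?_
    · intro a ha
      simp only [Finset.coe_filter, Finset.mem_product, Set.mem_ofPred_eq]
      refine ⟨⟨Finset.add_mem_add ha hb, Finset.add_mem_add
        (Finset.mem_image_of_mem _ ha) (Finset.mem_image_of_mem _ (hBA hc))⟩, by ring⟩
    · intro a _ a' _ h
      simpa using congrArg Prod.fst h
  calc (#A : ℝ) ^ 2 * #B = ∑ b ∈ A, ∑ c ∈ B, (#A : ℝ) := by simp; ring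
    _ ≤ ∑ b ∈ A, ∑ c ∈ B, _ := Finset.sum_le_sum fun b hb => Finset.sum_le_sum fun c hc => h b hb c hc
    _ = _ := by
      simp only [auxN]
      rw [Finset.sum_comm (t := A)]
      refine Finset.sum_congr rfl fun b _ => ?_
      rw [Finset.sum_comm]

lemma aux_cs {R : Type} [CommRing R] [Fintype R] [DecidableEq R] [Nontrivial R] (A B : Finset R)
    (hBA : B ⊆ A) (P V : ℝ)
    (hP : P = #(A + A) * #(A.image (fun x => x ^ 3) + A.image (fun x => x ^ 3)))
    (hV : ∑ x, ∑ y, auxN A B x y ^ 2 ≤ (#A * #B : ℝ) ^ 2 + V)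
    (hPs : P ≤ #A * Fintype.card R / 2) :
    ((#A : ℝ) ^ 2 * #B / 2) ^ 2 ≤ P * V := by
  set N : ℝ := ((Fintype.card R : ℕ) : ℝ) with hN
  have hN0 : 0 < N := by rw [hN]; exact_mod_cast Fintype.card_pos
  set μ : ℝ := #A * #B / N with hμ
  set Q := (A + A) ×ˢ (A.image (fun x => x ^ 3) + A.image (fun x => x ^ 3)) with hQ
  have hQP : (#Q : ℝ) = P := by rw [hP, hQ, Finset.card_product]; push_cast; rfl
  have hP0 : 0 ≤ P := by rw [← hQP]; positivity
  have h1 := aux_incidence A B hBA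
  have h2 : (∑ p ∈ Q, (auxN A B p.1 p.2 - μ)) ^ 2 ≤ P * ∑ p ∈ Q, (auxN A B p.1 p.2 - μ) ^ 2 := by
    rw [← hQP]; exact sq_sum_le_card_mul_sum_sq
  have h3 : ∑ p ∈ Q, (auxN A B p.1 p.2 - μ) ^ 2 ≤ V := by
    calc _ ≤ ∑ p : R × R, (auxN A B p.1 p.2 - μ) ^ 2 :=
          Finset.sum_le_sum_of_subset_of_nonneg (Finset.subset_univ _) fun _ _ _ => sq_nonneg _
      _ = ∑ x, ∑ y, auxN A B x y ^ 2 - 2 * μ * (∑ x, ∑ y, auxN A B x y) + N ^ 2 * μ ^ 2 := by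
          rw [Fintype.sum_prod_type]
          simp only [sub_sq, Finset.sum_add_distrib, Finset.sum_sub_distrib, Finset.mul_sum,
            Finset.sum_const, nsmul_eq_mul, Finset.card_univ, ← hN]
          have : ∀ x y, 2 * auxN A B x y * μ = 2 * μ * auxN A B x y := fun _ _ => by ring
          simp only [this]
          ring
      _ ≤ V := by
          rw [auxN_sum, ← hN]
          have : N * μ = #A * #B := by rw [hμ]; field_simp
          have e : 2 * μ * (N * (#A * #B)) = 2 * (#A * #B) ^ 2 := by
            linear_combination 2 * (#A * #B : ℝ) * this
          have e2 : N ^ 2 * μ ^ 2 = (#A * #B : ℝ) ^ 2 := by rw [← this]; ring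
          rw [e, e2]; linarith
  have h4 : (#A : ℝ) ^ 2 * #B / 2 ≤ ∑ p ∈ Q, (auxN A B p.1 p.2 - μ) := by
    rw [Finset.sum_sub_distrib, Finset.sum_const, nsmul_eq_mul, hQP]
    have : P * μ ≤ (#A * N / 2) * μ := by
      apply mul_le_mul_of_nonneg_right hPs; positivity
    have e : (#A * N / 2) * μ = (#A : ℝ) ^ 2 * #B / 2 := by rw [hμ]; field_simp
    linarith
  calc _ ≤ (∑ p ∈ Q, (auxN A B p.1 p.2 - μ)) ^ 2 := by gcongr
    _ ≤ _ := h2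
    _ ≤ _ := by gcongr

lemma aux_main {R K : Type} [CommRing R] [Fintype R] [DecidableEq R] [Nontrivial R]
    [Field K] [Fintype K] [DecidableEq K]
    (π : R →+* K) (hπ : Function.Surjective π)
    (hu : ∀ x, π x ≠ 0 → IsUnit x) (h6 : IsUnit (6 : R))
    (A : Finset R) (hA : A.Nonempty) (q N P : ℝ) (hq : q = Fintype.card K)
    (hN : N = Fintype.card R)
    (hP : P = #(A + A) * #(A.image (fun x => x ^ 3) + A.image (fun x => x ^ 3)))
    (hbig : 2 ^ 13 * N ^ 13 ≤ (#A : ℝ) ^ 13 * q ^ 5) :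
    N ^ 2 * (#A : ℝ) ^ 18 ≤ 2 ^ 80 * P ^ 10 := by
  obtain ⟨L, hL, hcard⟩ := aux_fiber π hπ
  set a : ℝ := ((#A : ℕ) : ℝ) with ha
  have hNL : N = q * L := by rw [hN, hq, hcard]; push_cast; rfl
  have hq1 : 1 ≤ q := by rw [hq]; exact_mod_cast Fintype.card_pos
  have hN0 : 0 < N := by rw [hN]; exact_mod_cast Fintype.card_pos
  have hL0 : (0 : ℝ) < L := by
    by_contra h
    nlinarith
  have ha0 : 0 < a := by rw [ha]; exact_mod_cast hA.card_pos
  have haN : a ≤ N := by rw [ha, hN]; exact_mod_cast Finset.card_le_univ A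
  have hb12 : N ^ 12 ≤ a ^ 12 * q ^ 5 := by
    have : a ^ 13 * q ^ 5 ≤ a ^ 12 * q ^ 5 * N := by
      have : a ^ 13 * q ^ 5 = a ^ 12 * q ^ 5 * a := by ring
      rw [this]; gcongr
    have h2 : N ^ 12 * N ≤ a ^ 12 * q ^ 5 * N := by
      have : 0 < N ^ 13 := by positivity
      nlinarith
    exact le_of_mul_le_mul_right h2 hN0
  rcases le_total (a * N / 2) P with hPl | hPs
  · calc N ^ 2 * a ^ 18 = N ^ 2 * a ^ 10 * a ^ 8 := by ring
      _ ≤ N ^ 2 * a ^ 10 * N ^ 8 := by gcongr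
      _ = 2 ^ 10 * (a * N / 2) ^ 10 := by ring
      _ ≤ 2 ^ 10 * P ^ 10 := by gcongr
      _ ≤ 2 ^ 80 * P ^ 10 := by
          have : 0 ≤ P ^ 10 := by positivity
          nlinarith
  · set s := √q with hs
    have hss : s ^ 2 = q := Real.sq_sqrt (by linarith)
    have hs1 : 1 ≤ s := by rw [hs]; exact Real.one_le_sqrt.mpr hq1
    have hsa : N ≤ s * a := by
      refine le_of_sq_le_sq ?_ (by positivity)
      rw [mul_pow, hss]
      refine le_of_pow_le_pow_left₀ (n := 6) (by norm_num) (by positivity) ?_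
      calc (N ^ 2) ^ 6 = N ^ 12 := by ring
        _ ≤ a ^ 12 * q ^ 5 := hb12
        _ ≤ a ^ 12 * q ^ 6 := by gcongr; norm_num
        _ = _ := by ring
    have haL : 2 * L ≤ a := by
      refine le_of_pow_le_pow_left₀ (n := 13) (by norm_num) (by positivity) ?_
      rw [hNL] at hbig
      have h1 : 2 ^ 13 * L ^ 13 * q ^ 8 ≤ a ^ 13 := by
        have : 2 ^ 13 * L ^ 13 * q ^ 8 * q ^ 5 ≤ a ^ 13 * q ^ 5 := by
          calc _ = 2 ^ 13 * (q * L) ^ 13 := by ring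
            _ ≤ _ := hbig
        exact le_of_mul_le_mul_right this (by positivity)
      calc (2 * (L : ℝ)) ^ 13 = 2 ^ 13 * L ^ 13 * 1 := by ring
        _ ≤ 2 ^ 13 * L ^ 13 * q ^ 8 := by gcongr; exact one_le_pow₀ hq1
        _ ≤ _ := h1
    set B := A.filter (fun c => π c ≠ 0) with hB
    set b : ℝ := ((#B : ℕ) : ℝ) with hb
    have hbA : a ≤ b + L := by
      have h1 : #A ≤ #B + L := by
        rw [← Finset.card_filter_add_card_filter_not (s := A) (fun c => π c ≠ 0), ← hL 0]
        apply Nat.add_le_add_left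
        apply Finset.card_le_card
        intro x; simp
      rw [ha, hb]; exact_mod_cast h1
    have hb0 : 0 < b := by linarith
    have h2nd := aux_second π hu h6 L hL A B (fun c hc => (Finset.mem_filter.mp hc).2)
    rw [← hq, ← hN, ← hs, ← ha, ← hb] at h2nd
    have hcs := aux_cs A B (Finset.filter_subset _ _) P (9 * s * L * a ^ 2 * b) hP (by
      refine h2nd.trans ?_
      rw [← ha, ← hb]
      have t1 : a ^ 2 * (3 * L * b) ≤ a ^ 2 * (3 * L * b) * s :=
        le_mul_of_one_le_right (by positivity) hs1
      have t2 : a * L * (3 * N * b) ≤ a * L * (3 * (s * a) * b) := by gcongr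
      nlinarith) (by rw [← hN]; exact hPs)
    rw [← ha, ← hb] at hcs
    have h5 : a ^ 3 ≤ 72 * s * L * P := by
      have e : a ^ 2 * b * (a ^ 2 * b) ≤ a ^ 2 * b * (36 * s * L * P) := by nlinarith
      have e2 := le_of_mul_le_mul_left e (by positivity)
      have e3 : a ^ 2 * (a / 2) ≤ a ^ 2 * b := by gcongr; linarith
      nlinarith
    have h6 : a ^ 3 * s ≤ 72 * N * P := by
      calc a ^ 3 * s ≤ 72 * s * L * P * s := by gcongr
        _ = 72 * (s ^ 2 * L) * P := by ring
        _ = _ := by rw [hss, hNL]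
    have h7 : (a ^ 3 * s) ^ 10 ≤ (72 * N * P) ^ 10 := by gcongr
    have hP0 : 0 ≤ P := by rw [hP]; positivity
    have h8 : N ^ 12 * a ^ 18 ≤ (2 ^ 80 * P ^ 10) * N ^ 10 := by
      calc N ^ 12 * a ^ 18 ≤ a ^ 12 * q ^ 5 * a ^ 18 := by gcongr
        _ = (a ^ 3 * s) ^ 10 := by rw [← hss]; ring
        _ ≤ (72 * N * P) ^ 10 := h7
        _ = 72 ^ 10 * (P ^ 10 * N ^ 10) := by ring
        _ ≤ 2 ^ 80 * (P ^ 10 * N ^ 10) := by gcongr; norm_num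
        _ = _ := by ring
    refine le_of_mul_le_mul_right (a := N ^ 10) ?_ (by positivity)
    calc _ = N ^ 12 * a ^ 18 := by ring
      _ ≤ _ := h8

/-- There is an absolute constant `c > 0` such that: for any finite
valuation ring `R` of order `q ^ r` in which `6` is a unit, and any nonempty `A ⊆ R`
with `|A+A|^4 ≥ q^(3r-1) * |A|`, one has
`max {|A+A|, |A³+A³|} ≥ c * q^(r/10) * |A|^(9/10)`. -/
theorem stmt_3 :
    ∃ c : ℝ, 0 < c ∧
      ∀ (R : Type) [CommRing R] [Fintype R] [DecidableEq R] [Nontrivial R]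
        [IsLocalRing R] [IsPrincipalIdealRing R]
        (q r : ℕ),
        Nat.card (IsLocalRing.ResidueField R) = q →
        IsLocalRing.maximalIdeal R ^ r = ⊥ →
        (∀ k < r, IsLocalRing.maximalIdeal R ^ k ≠ ⊥) →
        Fintype.card R = q ^ r →
        IsUnit (6 : R) →
        ∀ A : Finset R, A.Nonempty →
          q ^ (3 * r - 1) * A.card ≤ (A + A).card ^ 4 →
          c * (q : ℝ) ^ ((r : ℝ) / 10) * (A.card : ℝ) ^ ((9 : ℝ) / 10) ≤
            max (((A + A).card : ℝ))
              (((A.image (fun x => x ^ 3) + A.image (fun x => x ^ 3)).card : ℝ)) := by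
  refine ⟨1 / 16, by norm_num, ?_⟩
  intro R _ _ _ _ _ _ q r hq _ hr hcard h6 A hA hhyp
  classical
  have : Finite (IsLocalRing.ResidueField R) :=
    Finite.of_surjective _ (IsLocalRing.residue_surjective (R := R))
  let _ : Fintype (IsLocalRing.ResidueField R) := Fintype.ofFinite _
  have hr0 : 1 ≤ r := by
    rcases Nat.eq_zero_or_pos r with h | h
    · exfalso
      subst h
      rw [pow_zero] at hcard
      have := Fintype.one_lt_card (α := R)
      omega
    · exact h
  have hqK : (q : ℝ) = Fintype.card (IsLocalRing.ResidueField R) := by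
    rw [← hq, Nat.card_eq_fintype_card]
  have hN : ((q : ℝ) ^ r) = Fintype.card R := by rw [hcard]; push_cast; rfl
  set S : ℝ := ((#(A + A) : ℕ) : ℝ) with hS
  set T : ℝ := ((#(A.image (fun x => x ^ 3) + A.image (fun x => x ^ 3)) : ℕ) : ℝ) with hT
  set M := max S T with hM
  set N : ℝ := (q : ℝ) ^ r with hNdef
  set a : ℝ := ((#A : ℕ) : ℝ) with ha
  have hS0 : 0 ≤ S := by rw [hS]; positivity
  have hT0 : 0 ≤ T := by rw [hT]; positivity
  have hM0 : 0 ≤ M := le_max_of_le_left hS0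
  have ha0 : 0 < a := by rw [ha]; exact_mod_cast hA.card_pos
  have hq0 : (0 : ℝ) < q := by rw [hqK]; exact_mod_cast Fintype.card_pos
  have hN0 : 0 < N := by positivity
  have key : N ^ 2 * a ^ 18 ≤ 2 ^ 80 * M ^ 20 := by
    rcases le_total (2 ^ 13 * N ^ 13) (a ^ 13 * (q : ℝ) ^ 5) with hbig | hsmall
    · have h := aux_main (IsLocalRing.residue R) IsLocalRing.residue_surjective
        (fun x hx => by
          by_contra hcon
          exact hx ((IsLocalRing.residue_eq_zero_iff x).mpr
            ((IsLocalRing.mem_maximalIdeal x).mpr hcon))) h6 A hA q N (S * T) hqK hN rfl hbig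
      refine h.trans ?_
      have : S * T ≤ M * M := mul_le_mul (le_max_left _ _) (le_max_right _ _) hT0 hM0
      calc 2 ^ 80 * (S * T) ^ 10 ≤ 2 ^ 80 * (M * M) ^ 10 := by gcongr
        _ = _ := by ring
    · have h1 : N ^ 3 * a ≤ S ^ 4 * q := by
        have h2 : ((q : ℝ) ^ (3 * r - 1)) * a ≤ S ^ 4 := by
          rw [ha, hS]; exact_mod_cast hhyp
        have h3 : N ^ 3 = (q : ℝ) ^ (3 * r - 1) * q := by
          rw [hNdef, ← pow_succ, ← pow_mul]
          congr 1; omega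
        rw [h3]
        nlinarith
      have h2 : (N ^ 3 * a) ^ 5 ≤ (S ^ 4 * q) ^ 5 := by gcongr
      have hSM : S ≤ M := le_max_left _ _
      have h3 : N ^ 2 * a ^ 18 ≤ 2 ^ 13 * S ^ 20 := by
        refine le_of_mul_le_mul_right (a := N ^ 13 * (q : ℝ) ^ 5) ?_ (by positivity)
        calc N ^ 2 * a ^ 18 * (N ^ 13 * (q : ℝ) ^ 5) = (N ^ 3 * a) ^ 5 * (a ^ 13 * (q : ℝ) ^ 5) := by
              ring
          _ ≤ (S ^ 4 * q) ^ 5 * (2 ^ 13 * N ^ 13) := by gcongr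
          _ = _ := by ring
      calc _ ≤ _ := h3
        _ ≤ 2 ^ 80 * M ^ 20 := by gcongr <;> norm_num
  refine le_of_pow_le_pow_left₀ (n := 20) (by norm_num) hM0 ?_
  have e1 : ((q : ℝ) ^ ((r : ℝ) / 10)) ^ 20 = N ^ 2 := by
    rw [← Real.rpow_natCast, ← Real.rpow_mul hq0.le, hNdef, ← pow_mul, ← Real.rpow_natCast]
    congr 1; push_cast; ring
  have e2 : (a ^ ((9 : ℝ) / 10)) ^ 20 = a ^ 18 := by
    rw [← Real.rpow_natCast, ← Real.rpow_mul ha0.le, ← Real.rpow_natCast]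
    congr 1; push_cast; ring
  rw [mul_pow, mul_pow, e1, e2]
  nlinarith
end

section
/- Let R be a finite valuation ring of order q^r with q odd, and let A ⊆ R be a subset with |A|^3 ≥ q^{3r−1} (equivalently |A| ≥ q^{r−1/3}). Then max{|A−A|, |A·A + A·A|} ≥ 2^{−1/3}·|A|^{2/3}·q^{r/3}. -/
open Finset Pointwise

/-- size of the annihilator of `u` -/
def annCard {R : Type*} [CommRing R] [Fintype R] [DecidableEq R] (u : R) : ℕ :=
  (univ.filter (fun v : R => u * v = 0)).card

section alg
variable {R : Type*} [CommRing R] [Fintype R] [DecidableEq R]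

lemma annCard_uniformizer [IsLocalRing R] (z : R)
    (hz : IsLocalRing.maximalIdeal R = Ideal.span {z}) :
    annCard z = Nat.card (IsLocalRing.ResidueField R) := by
  classical
  have h1 := AddSubgroup.card_eq_card_quotient_mul_card_addSubgroup (AddMonoidHom.mulLeft z).ker
  have h2 := AddSubgroup.card_eq_card_quotient_mul_card_addSubgroup
    (IsLocalRing.maximalIdeal R).toAddSubgroup
  have h3 : Nat.card (R ⧸ (AddMonoidHom.mulLeft z).ker)
      = Nat.card (IsLocalRing.maximalIdeal R).toAddSubgroup := by
    rw [Nat.card_congr (QuotientAddGroup.quotientKerEquivRange (AddMonoidHom.mulLeft z)).toEquiv]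
    congr 1
    have : (AddMonoidHom.mulLeft z).range = (IsLocalRing.maximalIdeal R).toAddSubgroup := by
      ext x
      simp only [AddMonoidHom.mem_range, AddMonoidHom.coe_mulLeft, Submodule.mem_toAddSubgroup, hz,
        Ideal.mem_span_singleton]
      exact ⟨fun ⟨y, hy⟩ => ⟨y, hy.symm⟩, fun ⟨y, hy⟩ => ⟨y, hy.symm⟩⟩
    rw [this]
  have h4 : Nat.card (AddMonoidHom.mulLeft z).ker = annCard z := by
    rw [annCard]
    simp [Nat.card_eq_fintype_card, Fintype.card_subtype, AddMonoidHom.mem_ker]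
  have h5 : Nat.card (R ⧸ (IsLocalRing.maximalIdeal R).toAddSubgroup)
    = Nat.card (IsLocalRing.ResidueField R) := rfl
  have h6 : 0 < Nat.card (IsLocalRing.maximalIdeal R).toAddSubgroup := Nat.card_pos
  rw [h3, h4] at h1
  rw [h5] at h2
  rw [h1, mul_comm] at h2
  exact Nat.eq_of_mul_eq_mul_right h6 h2

lemma card_fiber_le (w b : R) (s : Finset R) :
    (s.filter (fun v => w * v = b)).card ≤ annCard w := by
  by_cases h : (s.filter (fun v => w * v = b)).Nonempty
  · obtain ⟨v0, h0⟩ := h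
    refine Finset.card_le_card_of_injOn (fun v => v - v0) ?_ ?_
    · intro v hv
      simp only [mem_coe, mem_filter] at hv h0 ⊢
      simp [mul_sub, hv.2, h0.2]
    · intro x _ y _ h
      simpa using h
  · rw [Finset.not_nonempty_iff_eq_empty.1 h]; simp

lemma annCard_pow (z : R) (q : ℕ) (h : annCard z ≤ q) (k : ℕ) : annCard (z ^ k) ≤ q ^ k := by
  induction k with
  | zero => simp [annCard, Finset.filter_eq']
  | succ k ih =>
    have : annCard (z ^ (k+1)) ≤ annCard (z^k) * annCard z := by
      refine Finset.card_le_mul_card_image_of_maps_to (f := fun v => z^k * v) ?_ _ ?_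
      · intro v hv
        simp only [mem_filter, mem_univ, true_and] at hv ⊢
        rw [← hv]; ring
      · intro b _
        exact card_fiber_le _ _ _
    calc _ ≤ _ := this
      _ ≤ q^k * q := Nat.mul_le_mul ih h
      _ = _ := by ring

lemma exists_val [IsLocalRing R] (z : R) (r : ℕ)
    (hz : IsLocalRing.maximalIdeal R = Ideal.span {z}) (hr : z ^ r = 0) (u : R) (hu : u ≠ 0) :
    ∃ k < r, ∃ w : R, IsUnit w ∧ u = z ^ k * w := by
  classical
  have hex : ∃ k, ¬ z ^ k ∣ u := ⟨r, by rw [hr, zero_dvd_iff]; exact hu⟩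
  have hk := Nat.find_spec hex
  have hmin := fun m hm => not_not.1 (Nat.find_min hex (m := m) hm)
  have hle : Nat.find hex ≤ r := Nat.find_min' hex (by rw [hr, zero_dvd_iff]; exact hu)
  obtain ⟨j, hj⟩ : ∃ j, Nat.find hex = j + 1 := by
    refine Nat.exists_eq_succ_of_ne_zero ?_
    intro h0
    rw [h0] at hk
    simp at hk
  rw [hj] at hk hmin hle
  obtain ⟨w, hw⟩ := hmin j (by omega)
  refine ⟨j, by omega, w, ?_, hw⟩
  by_contra hnu
  have : w ∈ IsLocalRing.maximalIdeal R := hnu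
  rw [hz, Ideal.mem_span_singleton] at this
  obtain ⟨t, rfl⟩ := this
  exact hk ⟨t, by rw [hw]; ring⟩

lemma sum_annCard [IsLocalRing R] (z : R) (q r : ℕ)
    (hz : IsLocalRing.maximalIdeal R = Ideal.span {z}) (hr : z ^ r = 0)
    (hq : annCard z ≤ q) (hq1 : 1 ≤ q) :
    (∑ u ∈ univ.filter (fun u : R => u ≠ 0), (annCard u : ℝ) ^ 4) * ((q : ℝ) ^ 3 - 1)
      ≤ ((q : ℝ) ^ r) ^ 4 := by
  have hq1' : (1:ℝ) ≤ q := by exact_mod_cast hq1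
  have h1 : ∑ u ∈ univ.filter (fun u : R => u ≠ 0), annCard u ^ 4 ≤
      ∑ k ∈ range r, q ^ (4 * k) * q ^ (r - k) := by
    calc _ ≤ ∑ u ∈ univ.filter (fun u : R => u ≠ 0), ∑ k ∈ range r,
          if z ^ (r - k) * u = 0 then q ^ (4 * k) else 0 := by
          refine sum_le_sum fun u hu => ?_
          obtain ⟨k, hk, w, hw, rfl⟩ := exists_val z r hz hr u (by simpa using hu)
          have ha : annCard (z ^ k * w) ≤ q ^ k := by
            refine le_trans (le_of_eq ?_) (annCard_pow z q hq k)
            unfold annCard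
            refine Finset.card_bij (fun v _ => w * v) ?_ ?_ ?_
            · intro v hv
              simpa [mul_assoc] using hv
            · intro v _ v' _ h
              exact hw.mul_left_cancel h
            · intro v hv
              obtain ⟨w', hw'⟩ := hw.exists_right_inv
              refine ⟨w' * v, ?_, ?_⟩
              · simp only [mem_filter, mem_univ, true_and] at hv ⊢
                calc _ = (w * w') * (z ^ k * v) := by ring
                  _ = 0 := by rw [hv, mul_zero]
              · rw [← mul_assoc, hw', one_mul]
          have h0 : z ^ (r - k) * (z ^ k * w) = 0 := by
            rw [← mul_assoc, ← pow_add, Nat.sub_add_cancel hk.le, hr, zero_mul]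
          calc _ ≤ (q ^ k) ^ 4 := Nat.pow_le_pow_left ha 4
            _ = (if z ^ (r - k) * (z ^ k * w) = 0 then q ^ (4 * k) else 0) := by
              rw [if_pos h0, ← pow_mul, mul_comm]
            _ ≤ _ := Finset.single_le_sum
              (f := fun j => if z ^ (r - j) * (z ^ k * w) = 0 then q ^ (4 * j) else 0)
              (fun _ _ => Nat.zero_le _) (mem_range.2 hk)
      _ = ∑ k ∈ range r, ∑ u ∈ univ.filter (fun u : R => u ≠ 0),
          if z ^ (r - k) * u = 0 then q ^ (4 * k) else 0 := sum_comm
      _ ≤ _ := by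
          refine sum_le_sum fun k _ => ?_
          rw [← sum_filter, sum_const, smul_eq_mul, mul_comm]
          refine Nat.mul_le_mul_left _ (le_trans ?_ (annCard_pow z q hq (r - k)))
          refine card_le_card ?_
          intro u hu
          simp only [mem_filter, mem_univ, true_and] at hu ⊢
          exact hu.2
  have h2 : (∑ u ∈ univ.filter (fun u : R => u ≠ 0), (annCard u : ℝ) ^ 4) ≤
      (q:ℝ) ^ r * ∑ k ∈ range r, ((q:ℝ) ^ 3) ^ k := by
    calc _ = ((∑ u ∈ univ.filter (fun u : R => u ≠ 0), annCard u ^ 4 : ℕ) : ℝ) := by push_cast; rfl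
      _ ≤ ((∑ k ∈ range r, q ^ (4 * k) * q ^ (r - k) : ℕ) : ℝ) := by exact_mod_cast h1
      _ = _ := by
        push_cast
        rw [mul_sum]
        refine sum_congr rfl fun k hk => ?_
        obtain ⟨j, hj⟩ := Nat.exists_eq_add_of_le (mem_range.1 hk).le
        subst hj
        rw [Nat.add_sub_cancel_left]
        ring
  have h3 : (0:ℝ) ≤ (q:ℝ)^3 - 1 := by
    have := one_le_pow₀ hq1' (n := 3)
    linarith
  calc _ ≤ ((q:ℝ) ^ r * ∑ k ∈ range r, ((q:ℝ) ^ 3) ^ k) * ((q : ℝ) ^ 3 - 1) :=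
        mul_le_mul_of_nonneg_right h2 h3
    _ = (q:ℝ)^r * (((q:ℝ)^3)^r - 1) := by rw [mul_assoc, geom_sum_mul]
    _ ≤ (q:ℝ)^r * (((q:ℝ)^3)^r) := by gcongr; linarith
    _ = _ := by ring

lemma exists_primitive [IsLocalRing R] (z : R) (r : ℕ)
    (hz : IsLocalRing.maximalIdeal R = Ideal.span {z}) (hr : z ^ r = 0) (hr' : z ^ (r-1) ≠ 0) :
    ∃ ψ : AddChar R ℂ, ψ.IsPrimitive := by
  obtain ⟨ψ, hψ⟩ := AddChar.exists_apply_ne_zero.2 hr'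
  refine ⟨ψ, fun u hu h => hψ ?_⟩
  obtain ⟨k, hk, w, hw, rfl⟩ := exists_val z r hz hr u hu
  obtain ⟨w', hw'⟩ := hw.exists_right_inv
  have := DFunLike.congr_fun h (w' * z ^ (r - 1 - k))
  rw [AddChar.mulShift_apply, AddChar.one_apply] at this
  rw [← this]
  congr 1
  calc z ^ (r-1) = z ^ (k + (r-1-k)) := by congr 1; omega
    _ = (w * w') * z ^ (k + (r-1-k)) := by rw [hw', one_mul]
    _ = _ := by ring

end alg

section fourier
variable {R : Type*} [CommRing R] [Fintype R] [DecidableEq R]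

lemma parseval (ψ : AddChar R ℂ) (hψ : ψ.IsPrimitive) (X : Finset R) (u : R) :
    ∑ b : R, ‖∑ x ∈ X, ψ (b * (u * x))‖ ^ 2 ≤ Fintype.card R * X.card * annCard u := by
  have h : ((∑ b : R, ‖∑ x ∈ X, ψ (b * (u * x))‖ ^ 2 : ℝ) : ℂ) =
      ((∑ x ∈ X, ∑ y ∈ X, if u * (x - y) = 0 then (Fintype.card R : ℝ) else 0 : ℝ) : ℂ) := by
    push_cast
    calc _ = ∑ b : R, ∑ x ∈ X, ∑ y ∈ X, ψ (b * (u * (x - y))) := by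
          refine sum_congr rfl fun b _ => ?_
          rw [← Complex.mul_conj', map_sum, sum_mul_sum]
          refine sum_congr rfl fun x _ => sum_congr rfl fun y _ => ?_
          rw [← AddChar.map_neg_eq_conj, ← AddChar.map_add_eq_mul]
          congr 1; ring
      _ = ∑ x ∈ X, ∑ y ∈ X, ∑ b : R, ψ (b * (u * (x - y))) := by
          rw [sum_comm]
          refine sum_congr rfl fun x _ => sum_comm
      _ = _ := by
          refine sum_congr rfl fun x _ => sum_congr rfl fun y _ => ?_
          rw [AddChar.sum_mulShift _ hψ]
          split_ifs <;> simp
  rw [Complex.ofReal_inj] at h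
  rw [h]
  calc _ ≤ ∑ x ∈ X, (Fintype.card R : ℝ) * annCard u := by
        refine sum_le_sum fun x _ => ?_
        rw [← sum_filter, sum_const, nsmul_eq_mul, mul_comm]
        gcongr
        refine le_trans (card_le_card ?_) (card_fiber_le u (u * x) X)
        intro y hy
        simp only [mem_filter, mul_sub, sub_eq_zero] at hy ⊢
        exact ⟨hy.1, hy.2.symm⟩
    _ = _ := by simp; ring

lemma G_bound (ψ : AddChar R ℂ) (hψ : ψ.IsPrimitive) (A D : Finset R) (u : R) :
    ‖∑ b ∈ A, (∑ x ∈ D, ψ (b * (u * x))) * ∑ a ∈ A, ψ (b * (u * a))‖ ^ 2 ≤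
      (Fintype.card R : ℝ) ^ 2 * D.card * A.card * (annCard u : ℝ) ^ 2 := by
  have h1 : ‖∑ b ∈ A, (∑ x ∈ D, ψ (b * (u * x))) * ∑ a ∈ A, ψ (b * (u * a))‖ ≤
      ∑ b : R, ‖∑ x ∈ D, ψ (b * (u * x))‖ * ‖∑ a ∈ A, ψ (b * (u * a))‖ := by
    refine (norm_sum_le _ _).trans ?_
    simp only [norm_mul]
    exact sum_le_sum_of_subset_of_nonneg (subset_univ _) (fun _ _ _ => by positivity)
  calc _ ≤ (∑ b : R, ‖∑ x ∈ D, ψ (b * (u * x))‖ * ‖∑ a ∈ A, ψ (b * (u * a))‖) ^ 2 := by gcongr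
    _ ≤ (∑ b : R, ‖∑ x ∈ D, ψ (b * (u * x))‖ ^ 2) * ∑ b : R, ‖∑ a ∈ A, ψ (b * (u * a))‖ ^ 2 :=
      sum_mul_sq_le_sq_mul_sq _ _ _
    _ ≤ (Fintype.card R * D.card * annCard u) * (Fintype.card R * A.card * annCard u) := by
      gcongr
      · exact parseval ψ hψ D u
      · exact parseval ψ hψ A u
    _ = _ := by ring

lemma count_lower (ψ : AddChar R ℂ) (hψ : ψ.IsPrimitive) (A : Finset R) :
    (Fintype.card R : ℝ) * (A.card : ℝ) ^ 6 ≤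
      ‖∑ u : R, (∑ p ∈ A * A + A * A, ψ (u * -p)) *
        (∑ b ∈ A, (∑ x ∈ A - A, ψ (b * (u * x))) * ∑ a ∈ A, ψ (b * (u * a))) ^ 2‖ := by
  set D := A - A with hD
  set P := A * A + A * A with hP
  set S := A ×ˢ D ×ˢ A with hS
  let f : R × R × R → R := fun s => s.1 * (s.2.1 + s.2.2)
  have hG : ∀ u : R, (∑ b ∈ A, (∑ x ∈ D, ψ (b * (u * x))) * ∑ a ∈ A, ψ (b * (u * a)))
      = ∑ s ∈ S, ψ (u * f s) := by
    intro u
    rw [hS, sum_product]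
    refine sum_congr rfl fun b _ => ?_
    rw [sum_product, sum_mul_sum]
    refine sum_congr rfl fun x _ => sum_congr rfl fun a _ => ?_
    rw [← AddChar.map_add_eq_mul]
    congr 1
    simp only [f]; ring
  clear_value S P D
  have key : (∑ u : R, (∑ p ∈ P, ψ (u * -p)) *
        (∑ b ∈ A, (∑ x ∈ D, ψ (b * (u * x))) * ∑ a ∈ A, ψ (b * (u * a))) ^ 2)
      = (((Fintype.card R : ℝ) *
        ((P ×ˢ S ×ˢ S).filter (fun t => -t.1 + (f t.2.1 + f t.2.2) = 0)).card : ℝ) : ℂ) := by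
    calc _ = ∑ u : R, ∑ t ∈ P ×ˢ S ×ˢ S, ψ (u * (-t.1 + (f t.2.1 + f t.2.2))) := by
          refine sum_congr rfl fun u _ => ?_
          rw [hG, sq, sum_mul_sum, sum_product, sum_mul]
          refine sum_congr rfl fun p _ => ?_
          rw [sum_product, mul_sum]
          refine sum_congr rfl fun s _ => ?_
          rw [mul_sum]
          refine sum_congr rfl fun s' _ => ?_
          rw [← AddChar.map_add_eq_mul, ← AddChar.map_add_eq_mul, mul_add, mul_add]
      _ = ∑ t ∈ P ×ˢ S ×ˢ S, ∑ u : R, ψ (u * (-t.1 + (f t.2.1 + f t.2.2))) := sum_comm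
      _ = ∑ t ∈ P ×ˢ S ×ˢ S, if (-t.1 + (f t.2.1 + f t.2.2)) = 0 then (Fintype.card R : ℂ) else 0 := by
          refine sum_congr rfl fun t _ => ?_
          rw [AddChar.sum_mulShift _ hψ]
          split_ifs <;> simp
      _ = _ := by
          rw [← sum_filter, sum_const, nsmul_eq_mul]
          push_cast; ring
  rw [key, Complex.norm_real, Real.norm_of_nonneg (by positivity)]
  gcongr
  have : A.card ^ 6 = ((A ×ˢ A ×ˢ A) ×ˢ (A ×ˢ A ×ˢ A)).card := by
    simp only [card_product]; ring
  rw [← Nat.cast_pow, this, Nat.cast_le]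
  refine Finset.card_le_card_of_injOn (fun t => (t.1.1 * t.1.2.1 + t.2.1 * t.2.2.1,
    (t.1.1, t.1.2.1 - t.1.2.2, t.1.2.2), (t.2.1, t.2.2.1 - t.2.2.2, t.2.2.2))) ?_ ?_
  · rintro ⟨⟨b, e, a⟩, ⟨d, g, c⟩⟩ ht
    simp only [coe_product, Set.mem_prod, mem_coe] at ht
    obtain ⟨⟨hb, he, ha⟩, hd, hg, hc⟩ := ht
    simp only [mem_coe, mem_filter, mem_product, hS, f, hP, hD]
    refine ⟨⟨add_mem_add (mul_mem_mul hb he) (mul_mem_mul hd hg), ⟨hb, sub_mem_sub he ha, ha⟩,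
      hd, sub_mem_sub hg hc, hc⟩, by ring⟩
  · rintro ⟨⟨b, e, a⟩, ⟨d, g, c⟩⟩ _ ⟨⟨b', e', a'⟩, ⟨d', g', c'⟩⟩ _ h
    simp only [Prod.mk.injEq] at h ⊢
    obtain ⟨_, ⟨h1, h2, h3⟩, h4, h5, h6⟩ := h
    subst h1 h3 h4 h6
    simp only [sub_left_inj] at h2 h5
    simp [h2, h5]

lemma main_ineq (ψ : AddChar R ℂ) (hψ : ψ.IsPrimitive) (A : Finset R) (E : ℝ)
    (hE : ∑ u ∈ univ.filter (fun u : R => u ≠ 0), (annCard u : ℝ) ^ 4 ≤ E) :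
    (Fintype.card R : ℝ) * (A.card : ℝ) ^ 6 ≤
      (A * A + A * A).card * (A - A).card ^ 2 * (A.card : ℝ) ^ 4 +
      (Fintype.card R : ℝ) ^ 2 * (A - A).card * A.card *
        √((Fintype.card R * (A * A + A * A).card) * E) := by
  refine (count_lower ψ hψ A).trans ?_
  set D := A - A with hD
  set P := A * A + A * A with hP
  set n : ℝ := (Fintype.card R : ℝ) with hn
  have hpar := parseval ψ hψ P 1
  have hann1 : annCard (1:R) = 1 := by simp [annCard, Finset.filter_eq']
  rw [hann1] at hpar
  have hF : ∀ u : R, ‖∑ p ∈ P, ψ (u * -p)‖ = ‖∑ p ∈ P, ψ (u * (1 * p))‖ := by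
    intro u
    rw [← RCLike.norm_conj, map_sum]
    congr 1
    refine sum_congr rfl fun p _ => ?_
    rw [← AddChar.map_neg_eq_conj]
    congr 1; ring
  rw [← Finset.sum_filter_add_sum_filter_not univ (fun u : R => u = 0)]
  refine (norm_add_le _ _).trans ?_
  gcongr ?_ + ?_
  · rw [filter_eq' univ (0:R), if_pos (mem_univ _), sum_singleton]
    simp only [zero_mul, mul_zero, AddChar.map_zero_eq_one, sum_const, nsmul_eq_mul, mul_one]
    rw [← Nat.cast_mul, ← Nat.cast_mul, ← Nat.cast_pow, ← Nat.cast_mul, Complex.norm_natCast]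
    push_cast
    apply le_of_eq; ring
  · calc _ ≤ ∑ u ∈ univ.filter (fun u : R => u ≠ 0), ‖∑ p ∈ P, ψ (u * (1 * p))‖ *
          (n ^ 2 * D.card * A.card * (annCard u : ℝ) ^ 2) := by
          refine (norm_sum_le _ _).trans (sum_le_sum fun u _ => ?_)
          rw [norm_mul, hF, norm_pow]
          gcongr
          exact G_bound ψ hψ A D u
      _ = n ^ 2 * D.card * A.card * ∑ u ∈ univ.filter (fun u : R => u ≠ 0),
          ‖∑ p ∈ P, ψ (u * (1 * p))‖ * (annCard u : ℝ) ^ 2 := by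
          rw [mul_sum]
          refine sum_congr rfl fun u _ => by ring
      _ ≤ _ := by
          gcongr
          refine Real.le_sqrt_of_sq_le ?_
          refine (sum_mul_sq_le_sq_mul_sq _ _ _).trans ?_
          gcongr
          · refine le_trans (sum_le_sum_of_subset_of_nonneg (subset_univ _)
              (fun _ _ _ => by positivity)) (hpar.trans (by simp [hn]))
          · refine le_trans (le_of_eq ?_) hE
            refine sum_congr rfl fun u _ => by ring

end fourier

/-- The purely numerical part. -/
lemma numeric (n N D P M q E : ℝ) (hn : 0 < n) (hN : 0 < N) (hD0 : 0 ≤ D) (hP0 : 0 ≤ P)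
    (hDM : D ≤ M) (hPM : P ≤ M) (hND : N ≤ D) (hq : q ≤ 8 ∨ 9 ≤ q) (hq1 : 1 ≤ q)
    (hE0 : 0 ≤ E) (hE : E * (q ^ 3 - 1) ≤ n ^ 4) (hA : n ^ 3 ≤ q * N ^ 3)
    (h : n * N ^ 6 ≤ P * D ^ 2 * N ^ 4 + n ^ 2 * D * N * √((n * P) * E)) :
    N ^ 2 * n / 2 ≤ M ^ 3 := by
  have hM : 0 ≤ M := hD0.trans hDM
  rcases hq with hq | hq
  · have h1 : n ^ 3 ≤ (2 * N) ^ 3 := by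
      have : q * N ^ 3 ≤ 8 * N ^ 3 := by gcongr
      calc _ ≤ _ := hA
        _ ≤ _ := this
        _ = _ := by ring
    have h2 : n ≤ 2 * N := le_of_pow_le_pow_left₀ (by norm_num) (by positivity) h1
    have h3 : N ^ 3 ≤ M ^ 3 := by
      have := hND.trans hDM
      gcongr
    have h4 : N ^ 2 * n ≤ N ^ 2 * (2 * N) := by gcongr
    nlinarith
  · by_contra hlt
    push Not at hlt
    have hPD : P * D ^ 2 ≤ M ^ 3 := by
      calc _ ≤ M * M ^ 2 := by gcongr
        _ = _ := by ring
    have hPD' : P * D ^ 2 < N ^ 2 * n / 2 := hPD.trans_lt hlt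
    have h1 : P * D ^ 2 * N ^ 4 ≤ N ^ 2 * n / 2 * N ^ 4 := by gcongr
    have h2 : n * N ^ 6 / 2 ≤ n ^ 2 * D * N * √((n * P) * E) := by linarith [h, h1]
    have h3 : (n * N ^ 6 / 2) ^ 2 ≤ (n ^ 2 * D * N * √((n * P) * E)) ^ 2 := by gcongr
    rw [mul_pow _ (√_), Real.sq_sqrt (by positivity)] at h3
    have hq3 : 0 < q ^ 3 - 1 := by nlinarith [sq_nonneg q]
    have h4 : (n ^ 2 * D * N) ^ 2 * (n * P * E) * (q ^ 3 - 1) ≤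
        n ^ 5 * N ^ 2 * (N ^ 2 * n / 2) * n ^ 4 := by
      calc _ = n ^ 5 * N ^ 2 * (P * D ^ 2) * (E * (q ^ 3 - 1)) := by ring
        _ ≤ _ := by gcongr
    have h5 : (n * N ^ 6 / 2) ^ 2 * (q ^ 3 - 1) ≤ n ^ 5 * N ^ 2 * (N ^ 2 * n / 2) * n ^ 4 :=
      (mul_le_mul_of_nonneg_right h3 hq3.le).trans h4
    have h6 : N ^ 8 * (q ^ 3 - 1) ≤ 2 * n ^ 8 := by
      have hpos : 0 < n ^ 2 * N ^ 4 / 4 := by positivity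
      refine le_of_mul_le_mul_left ?_ hpos
      calc _ = (n * N ^ 6 / 2) ^ 2 * (q ^ 3 - 1) := by ring
        _ ≤ _ := h5
        _ = _ := by ring
    have h7 : (N ^ 8 * (q ^ 3 - 1)) ^ 3 ≤ (2 * n ^ 8) ^ 3 := by gcongr
    have h8 : (n ^ 3) ^ 8 ≤ (q * N ^ 3) ^ 8 := by gcongr
    have h9 : N ^ 24 * (q ^ 3 - 1) ^ 3 ≤ N ^ 24 * (8 * q ^ 8) := by
      calc _ = (N ^ 8 * (q ^ 3 - 1)) ^ 3 := by ring
        _ ≤ _ := h7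
        _ = 8 * (n ^ 3) ^ 8 := by ring
        _ ≤ 8 * (q * N ^ 3) ^ 8 := by gcongr
        _ = _ := by ring
    have h10 : (q ^ 3 - 1) ^ 3 ≤ 8 * q ^ 8 := le_of_mul_le_mul_left h9 (by positivity)
    -- but q^9 ≥ 9 q^8
    have e1 : 9 * q ^ 8 ≤ q ^ 9 := by
      calc _ ≤ q * q ^ 8 := by gcongr
        _ = _ := by ring
    have e2 : 9 * q ^ 6 ≤ q ^ 8 := by
      calc _ ≤ q ^ 2 * q ^ 6 := by gcongr; nlinarith
        _ = _ := by ring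
    have e3 : 1 ≤ q ^ 3 := one_le_pow₀ hq1
    have e4 : 0 < q ^ 6 := by positivity
    nlinarith

theorem stmt_5 {R : Type*} [CommRing R] [Fintype R] [DecidableEq R] [Nontrivial R]
    [IsLocalRing R] [IsPrincipalIdealRing R]
    (q r : ℕ)
    (hq : Nat.card (IsLocalRing.ResidueField R) = q)
    (hqodd : Odd q)
    (hnil : IsLocalRing.maximalIdeal R ^ r = ⊥)
    (hnil' : ∀ k < r, IsLocalRing.maximalIdeal R ^ k ≠ ⊥)
    (hcard : Fintype.card R = q ^ r)
    (A : Finset R)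
    (hA : q ^ (3 * r - 1) ≤ A.card ^ 3) :
    (2 : ℝ) ^ (-(1 / 3) : ℝ) * (A.card : ℝ) ^ ((2 : ℝ) / 3) * (q : ℝ) ^ ((r : ℝ) / 3) ≤
      max (((A - A).card : ℝ)) (((A * A + A * A).card : ℝ)) := by
  have hq1 : 1 ≤ q := hqodd.pos
  have hr : 1 ≤ r := by
    rcases Nat.eq_zero_or_pos r with h | h
    · subst h
      simp at hnil
    · exact h
  obtain ⟨z, hz⟩ : ∃ z, IsLocalRing.maximalIdeal R = Ideal.span {z} :=
    (IsPrincipalIdealRing.principal (IsLocalRing.maximalIdeal R)).principal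
  rw [hz] at hnil hnil'
  simp only [Ideal.span_singleton_pow, ne_eq, Ideal.span_singleton_eq_bot] at hnil hnil'
  have hann : annCard z = q := (annCard_uniformizer z hz).trans hq
  obtain ⟨ψ, hψ⟩ := exists_primitive z r hz hnil (hnil' (r-1) (by omega))
  have hsum := sum_annCard z q r hz hnil hann.le hq1
  have hineq := main_ineq ψ hψ A _ le_rfl
  have hqr : (1:ℝ) ≤ q := by exact_mod_cast hq1
  have hApos : 0 < A.card := by
    by_contra h0
    have h0' : A.card = 0 := by omega
    rw [h0'] at hA
    have := Nat.pow_pos (n := 3 * r - 1) hq1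
    simp at hA
    omega
  have hAne : A.Nonempty := card_pos.1 hApos
  have hND : A.card ≤ (A - A).card := by
    obtain ⟨a, ha⟩ := hAne
    refine Finset.card_le_card_of_injOn (fun x => x - a) (fun x hx => ?_) (fun x _ y _ h => ?_)
    · exact sub_mem_sub hx ha
    · simpa using h
  have hAA : ((q:ℝ) ^ r) ^ 3 ≤ q * (A.card : ℝ) ^ 3 := by
    have : (q ^ r) ^ 3 ≤ q * A.card ^ 3 := by
      calc _ = q * q ^ (3 * r - 1) := by
            rw [← pow_mul, ← pow_succ']; congr 1; omega
        _ ≤ _ := Nat.mul_le_mul_left _ hA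
    exact_mod_cast this
  have hncast : (Fintype.card R : ℝ) = (q:ℝ) ^ r := by rw [hcard]; push_cast; rfl
  rw [hncast] at hineq
  have hfin := numeric ((q:ℝ)^r) A.card (A - A).card (A * A + A * A).card
    (max (((A - A).card : ℝ)) (((A * A + A * A).card : ℝ))) q _ (by positivity)
    (by exact_mod_cast hApos) (by positivity) (by positivity) (le_max_left _ _) (le_max_right _ _)
    (by exact_mod_cast hND) (by
      rcases le_or_gt q 8 with h | h
      · left; exact_mod_cast h
      · right; exact_mod_cast h) hqr (sum_nonneg fun _ _ => by positivity) hsum hAA hineq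
  refine le_of_pow_le_pow_left₀ (n := 3) (by norm_num) (by positivity) (le_trans (le_of_eq ?_) hfin)
  rw [mul_pow, mul_pow]
  have hA0 : (0:ℝ) ≤ A.card := by positivity
  rw [← Real.rpow_natCast, ← Real.rpow_natCast (_ ^ _), ← Real.rpow_natCast ((q:ℝ) ^ _),
    ← Real.rpow_mul (by norm_num), ← Real.rpow_mul hA0, ← Real.rpow_mul (by positivity)]
  have e1 : (-(1 / 3) : ℝ) * (3:ℕ) = -1 := by norm_num
  have e2 : ((2:ℝ) / 3) * (3:ℕ) = (2:ℕ) := by norm_num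
  have e3 : ((r:ℝ) / 3) * (3:ℕ) = r := by push_cast; ring
  rw [e1, e2, e3, Real.rpow_natCast, Real.rpow_natCast, Real.rpow_neg_one]
  ring
end

section
/- There exists an absolute constant C > 0 with the following property. Let R be a finite valuation ring of order q^r with q odd, and let A ⊆ R. Then the number of six-tuples (a, b, c, a', b', c') ∈ A^6 with a ≠ b, c ≠ b, a' ≠ b', c' ≠ b' satisfying (a − b)(c' − b') = (a' − b')(c − b) is at most C·( |A|^6 / q^r + q^{2r−1}·|A|^3 ). -/
open Finset Pointwise

/-- Filtration data of a finite valuation ring. -/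
structure VRData (R : Type) [CommRing R] [Fintype R] (I : ℕ → Ideal R) (q r : ℕ) : Prop where
  two_le : 2 ≤ q
  r_pos : 1 ≤ r
  anti : Antitone I
  zero : I 0 = ⊤
  last : I r = ⊥
  mul : ∀ i j x y, x ∈ I i → y ∈ I j → x * y ∈ I (i + j)
  card : ∀ k ≤ r, Nat.card (I k) = q ^ (r - k)
  cancel : ∀ i j x y, i < r → j ≤ r → x ∈ I i → x ∉ I (i + 1) → x * y ∈ I j → y ∈ I (j - i)
  div : ∀ i x z, x ∈ I i → x ∉ I (i + 1) → z ∈ I i → ∃ t, z = t * x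

theorem exists_level {R : Type} [CommRing R] (I : ℕ → Ideal R) (x : R) (i j : ℕ)
    (hij : i ≤ j) (hi : x ∈ I i) (hj : x ∉ I j) :
    ∃ k, i ≤ k ∧ k < j ∧ x ∈ I k ∧ x ∉ I (k + 1) := by
  induction j, hij using Nat.le_induction with
  | base => exact absurd hi hj
  | succ n hn ih =>
    by_cases h : x ∈ I n
    · exact ⟨n, hn, by omega, h, hj⟩
    · obtain ⟨k, h1, h2, h3, h4⟩ := ih h
      exact ⟨k, h1, by omega, h3, h4⟩

theorem vrdata (R : Type) [CommRing R] [Fintype R]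
    [IsLocalRing R] [IsPrincipalIdealRing R] (q r : ℕ)
    (hq : Nat.card (IsLocalRing.ResidueField R) = q)
    (hr : IsLocalRing.maximalIdeal R ^ r = ⊥)
    (hk : ∀ k < r, IsLocalRing.maximalIdeal R ^ k ≠ ⊥)
    (hc : Fintype.card R = q ^ r) :
    VRData R (fun k => IsLocalRing.maximalIdeal R ^ k) q r := by
  classical
  have hfin : Finite (IsLocalRing.ResidueField R) :=
    Finite.of_surjective _ (IsLocalRing.residue_surjective (R := R))
  have h2 : 2 ≤ q := by
    rw [← hq]; exact Finite.one_lt_card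
  obtain ⟨p, hp⟩ := (IsPrincipalIdealRing.principal (IsLocalRing.maximalIdeal R)).principal
  have hp' : IsLocalRing.maximalIdeal R = Ideal.span {p} := hp
  have hmem : ∀ k x, x ∈ IsLocalRing.maximalIdeal R ^ k ↔ ∃ c, x = p ^ k * c := by
    intro k x
    rw [hp', Ideal.span_singleton_pow, Ideal.mem_span_singleton]
    rfl
  have hpm : p ∈ IsLocalRing.maximalIdeal R := by
    rw [hp']; exact Ideal.mem_span_singleton_self p
  have hrpos : 1 ≤ r := by
    rcases Nat.eq_zero_or_pos r with h | h
    · subst h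
      have := Fintype.one_lt_card (α := R)
      simp at hc; omega
    · exact h
  have hpne : ∀ k < r, p ^ k ≠ 0 := by
    intro k hkr h0
    apply hk k hkr
    rw [hp', Ideal.span_singleton_pow, h0]; simp
  have hunit : ∀ i x, x ∈ IsLocalRing.maximalIdeal R ^ i →
      x ∉ IsLocalRing.maximalIdeal R ^ (i + 1) → ∃ u : Rˣ, x = p ^ i * u := by
    intro i x h1 h3
    obtain ⟨c, hc⟩ := (hmem i x).1 h1
    have : IsUnit c := by
      by_contra hcu
      apply h3
      have : c ∈ IsLocalRing.maximalIdeal R ^ 1 := by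
        rw [pow_one]; exact (IsLocalRing.mem_maximalIdeal c).2 hcu
      obtain ⟨d, hd⟩ := (hmem 1 c).1 this
      exact (hmem _ _).2 ⟨d, by rw [hc, hd]; ring⟩
    obtain ⟨u, hu⟩ := this
    exact ⟨u, by rw [hu, hc]⟩
  have hle : ∀ k, Nat.card (IsLocalRing.maximalIdeal R ^ k : Ideal R) ≤
      q * Nat.card (IsLocalRing.maximalIdeal R ^ (k+1) : Ideal R) := by
    intro k
    rw [← hq, ← Nat.card_prod]
    have hs := Function.surjInv_eq (IsLocalRing.residue_surjective (R := R))
    set g := Function.surjInv (IsLocalRing.residue_surjective (R := R))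
    let F : IsLocalRing.ResidueField R × (IsLocalRing.maximalIdeal R ^ (k+1) : Ideal R) →
        (IsLocalRing.maximalIdeal R ^ k : Ideal R) := fun z =>
      ⟨p ^ k * g z.1 + z.2, Ideal.add_mem _ ((hmem _ _).2 ⟨_, rfl⟩)
        (Ideal.pow_le_pow_right (Nat.le_succ k) z.2.2)⟩
    apply Nat.card_le_card_of_surjective F
    rintro ⟨x, hx⟩
    obtain ⟨c, rfl⟩ := (hmem _ _).1 hx
    have hd : c - g (IsLocalRing.residue R c) ∈ IsLocalRing.maximalIdeal R := by
      rw [← IsLocalRing.residue_eq_zero_iff, map_sub, hs, sub_self]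
    refine ⟨(IsLocalRing.residue R c, ⟨p ^ k * (c - g (IsLocalRing.residue R c)), ?_⟩), ?_⟩
    · rw [pow_succ]
      exact Ideal.mul_mem_mul ((hmem k _).2 ⟨1, by ring⟩) hd
    · apply Subtype.ext
      simp only [F]; ring
  have hup : ∀ j ≤ r, Nat.card (IsLocalRing.maximalIdeal R ^ (r - j) : Ideal R) ≤ q ^ j := by
    intro j
    induction j with
    | zero => intro _; simp [hr]
    | succ n ih =>
      intro hn
      have h := hle (r - (n+1))
      rw [show r - (n+1) + 1 = r - n by omega] at h
      calc _ ≤ _ := h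
        _ ≤ q * q ^ n := Nat.mul_le_mul_left _ (ih (by omega))
        _ = _ := by ring
  have hlo : ∀ k, q ^ r ≤ q ^ k * Nat.card (IsLocalRing.maximalIdeal R ^ k : Ideal R) := by
    intro k
    induction k with
    | zero => simp [← hc, Ideal.one_eq_top]
    | succ n ih =>
      calc _ ≤ _ := ih
        _ ≤ q ^ n * (q * _) := Nat.mul_le_mul_left _ (hle n)
        _ = _ := by ring
  refine ⟨h2, hrpos, fun a b hab => Ideal.pow_le_pow_right hab, by simp [Ideal.one_eq_top], hr, ?_, ?_, ?_, ?_⟩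
  · intro i j x y hx hy
    simp only [pow_add]
    exact Ideal.mul_mem_mul hx hy
  · intro k hkr
    apply le_antisymm
    · have := hup (r - k) (by omega)
      rwa [show r - (r - k) = k by omega] at this
    · have := hlo k
      have e : q ^ r = q ^ k * q ^ (r - k) := by rw [← pow_add]; congr 1; omega
      rw [e] at this
      exact Nat.le_of_mul_le_mul_left this (by positivity)
  · intro i j x y hir hjr hx hx' hxy
    by_contra hy
    obtain ⟨k, -, hkj, hy1, hy2⟩ := exists_level (fun k => IsLocalRing.maximalIdeal R ^ k) y 0 (j - i) (by omega) (by simp) hy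
    obtain ⟨u, rfl⟩ := hunit i x hx hx'
    obtain ⟨v, rfl⟩ := hunit k y hy1 hy2
    have h3 : p ^ i * u * (p ^ k * v) ∈ IsLocalRing.maximalIdeal R ^ (i + k + 1) :=
      Ideal.pow_le_pow_right (by omega) hxy
    obtain ⟨c, hc⟩ := (hmem _ _).1 h3
    have h4 : p ^ (i + k) * (u * v - p * c) = 0 := by
      have : p ^ (i + k) * (u * v - p * c) = p ^ i * u * (p ^ k * v) - p ^ (i + k + 1) * c := by ring
      rw [this, hc, sub_self]
    have h5 : IsUnit ((u : R) * v - p * c) := by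
      by_contra hcu
      have h6 : (u : R) * v - p * c ∈ IsLocalRing.maximalIdeal R := (IsLocalRing.mem_maximalIdeal _).2 hcu
      have h7 : (u : R) * v ∈ IsLocalRing.maximalIdeal R := by
        have := Ideal.add_mem _ h6 (Ideal.mul_mem_right c _ hpm)
        simpa using this
      exact (IsLocalRing.mem_maximalIdeal _).1 h7 (u * v : Rˣ).isUnit
    rw [h5.mul_left_eq_zero] at h4
    exact hpne (i + k) (by omega) h4
  · intro i x z hx hx' hz
    obtain ⟨u, rfl⟩ := hunit i x hx hx'
    obtain ⟨c, rfl⟩ := (hmem _ _).1 hz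
    exact ⟨c * (u⁻¹ : Rˣ), by
      have : (c * ((u⁻¹ : Rˣ) : R)) * (p ^ i * u) = p ^ i * c * (((u⁻¹ : Rˣ) : R) * u) := by ring
      rw [this]; simp⟩

section Core
open Classical
variable {R : Type} [CommRing R] [Fintype R] {I : ℕ → Ideal R} {q r : ℕ}

theorem VRData.card_coset (h : VRData R I q r) (k : ℕ) (hk : k ≤ r) (c : R) :
    (univ.filter (fun t : R => t - c ∈ I k)).card = q ^ (r - k) := by
  rw [← h.card k hk, Nat.card_eq_fintype_card, Fintype.card_subtype]
  apply Finset.card_bij (fun t _ => t - c)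
  · intro t ht; simpa using ht
  · intro a _ b _ hab; simpa using hab
  · intro b hb; exact ⟨b + c, by simpa using hb, by simp⟩

/-- number of offsets -/
theorem VRData.lemA (h : VRData R I q r) (i : ℕ) (hi : 2 * i ≤ r) (c : R) (hc : c ∈ I i) :
    ((univ.filter (fun s : R => s ∈ I i)).filter (fun s => c - s ∈ I (r - i))).card = q ^ i := by
  have := h.card_coset (r - i) (by omega) c
  rw [show r - (r - i) = i by omega] at this
  rw [← this]
  congr 1
  ext s
  simp only [mem_filter, mem_univ, true_and]
  constructor
  · rintro ⟨_, h2⟩; rw [← neg_sub]; exact neg_mem h2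
  · intro h2
    have h3 : s - c ∈ I i := h.anti (by omega) h2
    refine ⟨?_, by rw [← neg_sub]; exact neg_mem h2⟩
    have := add_mem h3 hc
    simpa using this

theorem VRData.lemB (h : VRData R I q r) (i : ℕ) (hi : 2 * i ≤ r) (dx dy : R) (hx : dx ∈ I i) :
    ((univ.filter (fun t : R => dy - t * dx ∈ I (r - i))).card : ℝ) ≤
      (q : ℝ) ^ (2 * i) + ∑ k ∈ Ioc i (r - i),
        (q : ℝ) ^ (i + k) * (if dx ∈ I k ∧ dy ∈ I k then 1 else 0) := by
  have hq := h.two_le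
  have hnn : ∀ k ∈ Ioc i (r - i),
      0 ≤ (q : ℝ) ^ (i + k) * (if dx ∈ I k ∧ dy ∈ I k then 1 else 0) := by
    intro k _; split_ifs <;> simp
  have hS := Finset.sum_nonneg hnn
  have key : ∀ k, i ≤ k → k ≤ r - i → dx ∈ I k → dy ∈ I k →
      (q : ℝ) ^ (i + k) ≤ (q : ℝ) ^ (2 * i) + ∑ k ∈ Ioc i (r - i),
        (q : ℝ) ^ (i + k) * (if dx ∈ I k ∧ dy ∈ I k then 1 else 0) := by
    intro k h1 h2 h3 h4
    rcases h1.eq_or_lt with h5 | h5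
    · subst h5; rw [← two_mul]; linarith
    · have := Finset.single_le_sum hnn (mem_Ioc.2 ⟨h5, h2⟩)
      rw [if_pos ⟨h3, h4⟩, mul_one] at this
      have : (0:ℝ) ≤ (q : ℝ) ^ (2 * i) := by positivity
      linarith
  rcases (univ.filter (fun t : R => dy - t * dx ∈ I (r - i))).eq_empty_or_nonempty with he | ⟨t0, ht0⟩
  · rw [he]; simp only [card_empty, Nat.cast_zero]; positivity
  simp only [mem_filter, mem_univ, true_and] at ht0
  have hdy : ∀ k ≤ r - i, dx ∈ I k → dy ∈ I k := by
    intro k hk h1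
    have := add_mem (h.anti hk ht0) (Ideal.mul_mem_left _ t0 h1)
    simpa using this
  by_cases hJ : dx ∈ I (r - i)
  · refine le_trans ?_ (key (r - i) (by omega) le_rfl hJ (hdy _ le_rfl hJ))
    have h1 := h.card_coset 0 (by omega) 0
    have h2 : (univ.filter (fun t : R => dy - t * dx ∈ I (r - i))).card ≤ q ^ (i + (r - i)) := by
      rw [show i + (r - i) = r - 0 by omega, ← h1]
      apply Finset.card_le_card
      intro t _; simp [h.zero]
    exact_mod_cast h2
  · obtain ⟨k, h1, h2, h3, h4⟩ := exists_level I dx i (r - i) (by omega) hx hJ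
    refine le_trans ?_ (key k h1 h2.le h3 (hdy _ h2.le h3))
    have h5 := h.card_coset (r - i - k) (by omega) t0
    have h6 : (univ.filter (fun t : R => dy - t * dx ∈ I (r - i))).card ≤ q ^ (i + k) := by
      rw [show i + k = r - (r - i - k) by omega, ← h5]
      apply Finset.card_le_card
      intro t ht
      simp only [mem_filter, mem_univ, true_and] at ht ⊢
      apply h.cancel k (r - i) dx _ (by omega) (by omega) h3 h4
      have := sub_mem ht0 ht
      convert this using 1; ring
    exact_mod_cast h6

/-- slopes -/
theorem VRData.lemC (h : VRData R I q r) (i : ℕ) (hi : i < r) (x z : R) (hx : x ∈ I i)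
    (hx' : x ∉ I (i + 1)) :
    (univ.filter (fun t : R => z = t * x)).card ≤ q ^ i := by
  rcases (univ.filter (fun t : R => z = t * x)).eq_empty_or_nonempty with he | ⟨t0, ht0⟩
  · rw [he]; simp
  · simp only [mem_filter, mem_univ, true_and] at ht0
    have h5 := h.card_coset (r - i) (by omega) t0
    rw [show r - (r - i) = i by omega] at h5
    rw [← h5]
    apply Finset.card_le_card
    intro t ht
    simp only [mem_filter, mem_univ, true_and] at ht ⊢
    apply h.cancel i r x _ hi le_rfl hx hx'
    have : x * (t - t0) = t * x - t0 * x := by ring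
    rw [this, ← ht, ← ht0, sub_self]; exact zero_mem _

theorem VRData.lemC' (h : VRData R I q r) (i : ℕ) (hi : i < r) (x z : R) (hx : x ∈ I i)
    (hx' : x ∉ I (i + 1)) (hz : z ∈ I i) :
    q ^ i ≤ (univ.filter (fun t : R => z = t * x)).card := by
  obtain ⟨t0, ht0⟩ := h.div i x z hx hx' hz
  have h5 := h.card_coset (r - i) (by omega) t0
  rw [show r - (r - i) = i by omega] at h5
  rw [← h5]
  apply Finset.card_le_card
  intro t ht
  simp only [mem_filter, mem_univ, true_and] at ht ⊢
  have h1 := h.mul _ _ _ _ ht hx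
  rw [show r - i + i = r by omega, h.last, Ideal.mem_bot] at h1
  rw [ht0]
  have : t * x = t0 * x + (t - t0) * x := by ring
  rw [this, h1, add_zero]

theorem geom_aux (q : ℕ) (hq : 2 ≤ q) (N i : ℕ) (m : ℕ) (hm : m ≤ N) :
    ∑ k ∈ Ioc i m, (q : ℝ) ^ (N - k) ≤ 2 * (q : ℝ) ^ (N - i - 1) := by
  have hq' : (2:ℝ) ≤ q := by exact_mod_cast hq
  have hq0 : (0:ℝ) < q := by linarith
  rcases le_or_gt m i with h | h
  · rw [Ioc_eq_empty (by omega)]; simp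
  have key : ∀ m, i < m → m ≤ N → ∑ k ∈ Ioc i m, (q : ℝ) ^ (N - k) + (q : ℝ) ^ (N - m) ≤ 2 * (q : ℝ) ^ (N - i - 1) := by
    intro m hm
    induction m, hm using Nat.le_induction with
    | base => 
      intro _
      rw [show (i.succ) = i + 1 from rfl, Nat.Ioc_succ_singleton, sum_singleton, show N - (i+1) = N - i - 1 by omega]; linarith
    | succ n hn ih =>
      intro hN
      have h1 := ih (by omega)
      rw [← Finset.insert_Ioc_right_eq_Ioc_add_one (by omega : i ≤ n), sum_insert (by simp)]
      have : (q:ℝ) ^ (N - n) = q * (q:ℝ) ^ (N - (n+1)) := by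
        rw [← pow_succ']; congr 1; omega
      have h3 : 0 ≤ (q:ℝ) ^ (N - (n+1)) := by positivity
      nlinarith
  have := key m h hm
  have h3 : 0 ≤ (q:ℝ) ^ (N - m) := by positivity
  linarith

def KP (I : ℕ → Ideal R) (i : ℕ) (a b c : R × R) : Prop :=
  a.1 - b.1 ∈ I i ∧ a.1 - b.1 ∉ I (i + 1) ∧ a.2 - b.2 ∈ I i ∧ c.1 - b.1 ∈ I i ∧ c.2 - b.2 ∈ I i ∧
    (a.1 - b.1) * (c.2 - b.2) = (a.2 - b.2) * (c.1 - b.1)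

set_option maxHeartbeats 2000000 in
theorem VRData.core (h : VRData R I q r) (i : ℕ) (hi : 2 * i ≤ r) (hir : i < r) (X Y : Finset R) (x0 y0 : R)
    (hX : ∀ x ∈ X, x - x0 ∈ I i) (hY : ∀ y ∈ Y, y - y0 ∈ I i) :
    ∑ b ∈ X ×ˢ Y, ∑ a ∈ X ×ˢ Y, ∑ c ∈ X ×ˢ Y, (if KP I i a b c then (1 : ℝ) else 0) ≤
      2 * ((q : ℝ) ^ (2 * i) / (q : ℝ) ^ r) * ((X.card : ℝ) * Y.card) ^ 3 +
      8 * X.card * (X.card * Y.card) * (q : ℝ) ^ (2 * r - i - 1) := by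
  have hq2 : (2:ℝ) ≤ q := by exact_mod_cast h.two_le
  have hq0 : (0:ℝ) < q := by linarith
  set P := X ×ˢ Y with hP
  set M := univ.filter (fun s : R => s ∈ I i) with hM
  set L := (univ : Finset R) ×ˢ M with hL
  have hPc : (P.card : ℝ) = (X.card : ℝ) * Y.card := by rw [hP, card_product]; push_cast; ring
  let val : R → R × R → R := fun t p => (p.2 - y0) - t * (p.1 - x0)
  have hval : ∀ t, ∀ p ∈ P, val t p ∈ I i := by
    intro t p hp
    rw [hP, mem_product] at hp
    exact sub_mem (hY _ hp.2) (Ideal.mul_mem_left _ _ (hX _ hp.1))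
  let e : R × R → R × R → ℝ := fun l p => if val l.1 p - l.2 ∈ I (r - i) then 1 else 0
  let w : R → R × R → R × R → ℝ := fun t a b =>
    if a.1 - b.1 ∈ I i ∧ a.1 - b.1 ∉ I (i + 1) ∧ a.2 - b.2 = t * (a.1 - b.1) then 1 else 0
  let n : R × R → ℝ := fun l => ∑ p ∈ P, e l p
  let H : R × R → ℝ := fun l => ∑ b ∈ P, ∑ a ∈ P, w l.1 a b * e l b
  have he0 : ∀ l p, 0 ≤ e l p := by intro l p; simp only [e]; split_ifs <;> simp
  have hw0 : ∀ l a b, 0 ≤ w l a b := by intro l a b; simp only [w]; split_ifs <;> simp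
  have hn0 : ∀ l, 0 ≤ n l := fun l => Finset.sum_nonneg fun p _ => he0 l p
  have hH0 : ∀ l, 0 ≤ H l := fun l => Finset.sum_nonneg fun p _ => Finset.sum_nonneg fun a _ =>
    mul_nonneg (hw0 _ _ _) (he0 _ _)
  -- sum over s
  have hes : ∀ t, ∀ p ∈ P, ∑ s ∈ M, e (t, s) p = (q : ℝ) ^ i := by
    intro t p hp
    have := h.lemA i hi (val t p) (hval t p hp)
    simp only [e]
    rw [Finset.sum_boole]
    exact_mod_cast this
  -- (1)
  have h1 : (q : ℝ) ^ (2 * i) * ∑ b ∈ P, ∑ a ∈ P, ∑ c ∈ P, (if KP I i a b c then (1 : ℝ) else 0) ≤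
      ∑ l ∈ L, H l * n l := by
    have e1 : ∑ l ∈ L, H l * n l =
        ∑ b ∈ P, ∑ a ∈ P, ∑ c ∈ P, ∑ l ∈ L, w l.1 a b * e l b * e l c := by
      simp only [H, Finset.sum_mul]
      simp only [n, Finset.mul_sum]
      rw [Finset.sum_comm]
      refine Finset.sum_congr rfl fun b _ => ?_
      rw [Finset.sum_comm]
      refine Finset.sum_congr rfl fun a _ => ?_
      rw [Finset.sum_comm]
    rw [e1]
    simp only [Finset.mul_sum]
    refine Finset.sum_le_sum fun b hb => Finset.sum_le_sum fun a ha => Finset.sum_le_sum fun c hc => ?_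
    split_ifs with hK
    · obtain ⟨k1, k2, k3, k4, k5, k6⟩ := hK
      rw [hL, Finset.sum_product]
      have e2 : ∀ t : R, ∑ s ∈ M, w t a b * e (t, s) b * e (t, s) c = w t a b * (q : ℝ) ^ i := by
        intro t
        rw [← hes t b hb, Finset.mul_sum]
        refine Finset.sum_congr rfl fun s _ => ?_
        by_cases hw : a.2 - b.2 = t * (a.1 - b.1)
        · by_cases hee : val t b - s ∈ I (r - i)
          · have : val t c - s ∈ I (r - i) := by
              have h3 : (c.2 - b.2) - t * (c.1 - b.1) ∈ I (r - i) := by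
                apply h.cancel i r _ _ hir le_rfl k1 k2
                have : (a.1 - b.1) * ((c.2 - b.2) - t * (c.1 - b.1)) = 0 := by
                  rw [mul_sub, k6, hw]; ring
                rw [this]; exact zero_mem _
              have := add_mem hee h3
              convert this using 1
              simp only [val]; ring
            simp [e, hee, this]
          · simp [e, hee]
        · simp [w, hw]
      simp only [e2]
      rw [← Finset.sum_mul, mul_one, two_mul, pow_add]
      refine mul_le_mul_of_nonneg_right ?_ (by positivity)
      have h4 := h.lemC' i hir _ _ k1 k2 k3
      simp only [w, k1, k2, not_false_eq_true, true_and]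
      rw [Finset.sum_boole]
      exact_mod_cast h4
    · rw [mul_zero]
      exact Finset.sum_nonneg fun l _ => mul_nonneg (mul_nonneg (hw0 _ _ _) (he0 _ _)) (he0 _ _)
  -- (2)
  have h2 : ∀ l, H l ≤ X.card * n l := by
    intro l
    simp only [H, n, Finset.mul_sum]
    refine Finset.sum_le_sum fun b hb => ?_
    rw [← Finset.sum_mul]
    refine mul_le_mul_of_nonneg_right ?_ (he0 _ _)
    simp only [w]
    rw [Finset.sum_boole]
    have : (P.filter (fun a => a.1 - b.1 ∈ I i ∧ a.1 - b.1 ∉ I (i + 1) ∧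
        a.2 - b.2 = l.1 * (a.1 - b.1))).card ≤ X.card := by
      apply Finset.card_le_card_of_injOn (fun a => a.1)
      · intro a ha
        simp only [coe_filter, Set.mem_ofPred_eq, hP, mem_product] at ha
        exact ha.1.1
      · intro a ha a' ha' haa
        simp only [coe_filter, Set.mem_ofPred_eq] at ha ha' haa
        have h5 := ha.2.2.2
        have h6 := ha'.2.2.2
        rw [← haa, ← h5] at h6
        exact Prod.ext haa (by simpa using h6.symm)
    exact_mod_cast this
  -- (3)
  have h3 : ∑ l ∈ L, H l ≤ (q : ℝ) ^ (2 * i) * (P.card : ℝ) ^ 2 := by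
    have e1 : ∑ l ∈ L, H l = ∑ b ∈ P, ∑ a ∈ P, ∑ l ∈ L, w l.1 a b * e l b := by
      simp only [H]
      rw [Finset.sum_comm]
      refine Finset.sum_congr rfl fun b _ => ?_
      rw [Finset.sum_comm]
    rw [e1]
    have e2 : ∀ b ∈ P, ∀ a ∈ P, ∑ l ∈ L, w l.1 a b * e l b ≤ (q : ℝ) ^ (2 * i) := by
      intro b hb a ha
      rw [hL, Finset.sum_product]
      simp only [← Finset.mul_sum, hes _ b hb]
      rw [← Finset.sum_mul, two_mul, pow_add]
      refine mul_le_mul_of_nonneg_right ?_ (by positivity)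
      by_cases hk : a.1 - b.1 ∈ I i ∧ a.1 - b.1 ∉ I (i + 1)
      · simp only [w, hk.1, hk.2, not_false_eq_true, true_and]
        rw [Finset.sum_boole]
        exact_mod_cast h.lemC i hir _ _ hk.1 hk.2
      · have : ∀ t, w t a b = 0 := by
          intro t; simp only [w]; rw [if_neg]; tauto
        simp [this]
    calc _ ≤ ∑ b ∈ P, ∑ a ∈ P, (q : ℝ) ^ (2 * i) :=
          Finset.sum_le_sum fun b hb => Finset.sum_le_sum fun a ha => e2 b hb a ha
      _ = _ := by simp only [sum_const, nsmul_eq_mul]; ring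
  -- cards
  have hcR : ((univ : Finset R).card : ℝ) = (q : ℝ) ^ r := by
    have := h.card_coset 0 (by omega) 0
    simp only [h.zero, Submodule.mem_top, filter_true] at this
    rw [this]; simp
  have hcM : (M.card : ℝ) = (q : ℝ) ^ (r - i) := by
    have := h.card_coset i (by omega) 0
    simp only [sub_zero] at this
    rw [hM, this]; simp
  have hcL : (L.card : ℝ) = (q : ℝ) ^ r * (q : ℝ) ^ (r - i) := by
    rw [hL, card_product]; push_cast; rw [hcR, hcM]
  -- (4)
  have h4 : ∑ l ∈ L, n l = (q : ℝ) ^ r * (q : ℝ) ^ i * P.card := by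
    simp only [n]
    rw [Finset.sum_comm]
    have : ∀ p ∈ P, ∑ l ∈ L, e l p = (q : ℝ) ^ r * (q : ℝ) ^ i := by
      intro p hp
      rw [hL, Finset.sum_product]
      simp only [hes _ p hp, sum_const, nsmul_eq_mul, hcR]
    rw [Finset.sum_congr rfl this]
    simp only [sum_const, nsmul_eq_mul]; ring
  -- (5)
  have h5 : ∑ l ∈ L, n l ^ 2 ≤ (q : ℝ) ^ (3 * i) * (P.card : ℝ) ^ 2 +
      2 * P.card * ((q : ℝ) ^ (2 * i) * (q : ℝ) ^ (2 * r - i - 1)) := by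
    have e1 : ∑ l ∈ L, n l ^ 2 = ∑ p ∈ P, ∑ p' ∈ P, ∑ l ∈ L, e l p * e l p' := by
      simp only [n, sq, Finset.sum_mul_sum]
      rw [Finset.sum_comm]
      refine Finset.sum_congr rfl fun b _ => ?_
      rw [Finset.sum_comm]
    have e2 : ∀ p ∈ P, ∀ p' ∈ P, ∑ l ∈ L, e l p * e l p' ≤ (q : ℝ) ^ i * ((q : ℝ) ^ (2 * i) +
        ∑ k ∈ Ioc i (r - i), (q : ℝ) ^ (i + k) *
          (if p'.1 - p.1 ∈ I k ∧ p'.2 - p.2 ∈ I k then 1 else 0)) := by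
      intro p hp p' hp'
      have hdx : p'.1 - p.1 ∈ I i := by
        rw [hP, mem_product] at hp hp'
        have := sub_mem (hX _ hp'.1) (hX _ hp.1)
        simpa using this
      have e3 := h.lemB i hi (p'.1 - p.1) (p'.2 - p.2) hdx
      refine le_trans ?_ (mul_le_mul_of_nonneg_left e3 (by positivity))
      rw [hL, Finset.sum_product, ← Finset.sum_boole, Finset.mul_sum]
      refine Finset.sum_le_sum fun t _ => ?_
      split_ifs with ht
      · rw [mul_one, ← hes t p hp]
        refine Finset.sum_le_sum fun s _ => ?_
        have : e (t, s) p' ≤ 1 := by simp only [e]; split_ifs <;> simp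
        nlinarith [he0 (t, s) p]
      · rw [mul_zero]
        apply le_of_eq
        apply Finset.sum_eq_zero
        intro s _
        by_contra hne
        apply ht
        have g1 : val t p - s ∈ I (r - i) := by
          by_contra hh; apply hne; simp [e, hh]
        have g2 : val t p' - s ∈ I (r - i) := by
          by_contra hh; apply hne; simp [e, hh]
        have := sub_mem g2 g1
        convert this using 1
        simp only [val]; ring
    have e4 : ∀ k ≤ r, ∀ p ∈ P, ∑ p' ∈ P, (if p'.1 - p.1 ∈ I k ∧ p'.2 - p.2 ∈ I k then (1:ℝ) else 0)
        ≤ (q : ℝ) ^ (2 * (r - k)) := by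
      intro k hk p hp
      rw [Finset.sum_boole]
      have : (P.filter (fun p' => p'.1 - p.1 ∈ I k ∧ p'.2 - p.2 ∈ I k)).card ≤ q ^ (2 * (r - k)) := by
        rw [two_mul, pow_add]
        nth_rw 1 [← h.card_coset k hk p.1]
        rw [← h.card_coset k hk p.2, ← card_product]
        apply Finset.card_le_card
        intro p' hp'
        simp only [mem_filter] at hp'
        simp [hp'.2.1, hp'.2.2]
      exact_mod_cast this
    rw [e1]
    have e5 : ∀ p ∈ P, ∑ p' ∈ P, ∑ l ∈ L, e l p * e l p' ≤ (q : ℝ) ^ (3 * i) * P.card +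
       2 * ((q : ℝ) ^ (2 * i) * (q : ℝ) ^ (2 * r - i - 1)) := by
      intro p hp
      calc _ ≤ ∑ p' ∈ P, (q : ℝ) ^ i * ((q : ℝ) ^ (2 * i) +
            ∑ k ∈ Ioc i (r - i), (q : ℝ) ^ (i + k) *
            (if p'.1 - p.1 ∈ I k ∧ p'.2 - p.2 ∈ I k then 1 else 0)) :=
            Finset.sum_le_sum fun p' hp' => e2 p hp p' hp'
        _ = (q : ℝ) ^ (3 * i) * P.card + (q : ℝ) ^ i * ∑ k ∈ Ioc i (r - i), (q : ℝ) ^ (i + k) *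
            ∑ p' ∈ P, (if p'.1 - p.1 ∈ I k ∧ p'.2 - p.2 ∈ I k then 1 else 0) := by
            rw [← Finset.mul_sum, Finset.sum_add_distrib, Finset.sum_comm]
            simp only [sum_const, nsmul_eq_mul, ← Finset.mul_sum]
            ring
        _ ≤ (q : ℝ) ^ (3 * i) * P.card + (q : ℝ) ^ i * ∑ k ∈ Ioc i (r - i), (q : ℝ) ^ (i + k) *
            (q : ℝ) ^ (2 * (r - k)) := by
            gcongr with k hk
            exact e4 k (by rw [mem_Ioc] at hk; omega) p hp
        _ = (q : ℝ) ^ (3 * i) * P.card + (q : ℝ) ^ (2 * i) * ∑ k ∈ Ioc i (r - i), (q : ℝ) ^ (2 * r - k) := by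
            congr 1
            rw [Finset.mul_sum, Finset.mul_sum]
            refine Finset.sum_congr rfl fun k hk => ?_
            rw [mem_Ioc] at hk
            rw [← pow_add, ← pow_add, ← pow_add]
            congr 1; omega
        _ ≤ _ := by
            have := geom_aux q h.two_le (2 * r) i (r - i) (by omega)
            have g : (0:ℝ) ≤ (q : ℝ) ^ (2 * i) := by positivity
            nlinarith [mul_le_mul_of_nonneg_left this g]
    calc _ ≤ ∑ p ∈ P, ((q : ℝ) ^ (3 * i) * P.card +
       2 * ((q : ℝ) ^ (2 * i) * (q : ℝ) ^ (2 * r - i - 1))) := Finset.sum_le_sum e5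
      _ = _ := by simp only [sum_const, nsmul_eq_mul]; ring
  -- variance
  set μ : ℝ := (q : ℝ) ^ (2 * i) / (q : ℝ) ^ r * P.card with hμ
  have hμ0 : 0 ≤ μ := by positivity
  have h6 : ∑ l ∈ L, (n l - μ) ^ 2 ≤ 2 * P.card * ((q : ℝ) ^ (2 * i) * (q : ℝ) ^ (2 * r - i - 1)) := by
    have e1 : ∑ l ∈ L, (n l - μ) ^ 2 = ∑ l ∈ L, n l ^ 2 - 2 * μ * ∑ l ∈ L, n l + L.card * μ ^ 2 := by
      rw [Finset.mul_sum, ← Finset.sum_sub_distrib, ← nsmul_eq_mul, ← Finset.sum_const,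
        ← Finset.sum_add_distrib]
      refine Finset.sum_congr rfl fun l _ => by ring
    have e2 : (L.card : ℝ) * μ ^ 2 = (q : ℝ) ^ (3 * i) * (P.card : ℝ) ^ 2 := by
      have : (q : ℝ) ^ r = (q : ℝ) ^ (r - i) * (q : ℝ) ^ i := by rw [← pow_add]; congr 1; omega
      rw [hcL, hμ, this]
      field_simp
      try ring
    have e3 : 2 * μ * ((q : ℝ) ^ r * (q : ℝ) ^ i * P.card) = 2 * ((q : ℝ) ^ (3 * i) * (P.card : ℝ) ^ 2) := by
      rw [hμ]; field_simp
      try ring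
    rw [e1, e2, h4, e3]; linarith
  -- combine
  have h7 : ∑ l ∈ L, H l * n l ≤ 2 * μ * ∑ l ∈ L, H l + 4 * X.card * ∑ l ∈ L, (n l - μ) ^ 2 := by
    rw [Finset.mul_sum, Finset.mul_sum, ← Finset.sum_add_distrib]
    refine Finset.sum_le_sum fun l _ => ?_
    have hXc : (0:ℝ) ≤ X.card := by positivity
    rcases le_or_gt (n l) (2 * μ) with hc | hc
    · have : 0 ≤ 4 * (X.card : ℝ) * (n l - μ) ^ 2 := by positivity
      nlinarith [hH0 l]
    · have a1 : H l * n l ≤ X.card * n l * n l := mul_le_mul_of_nonneg_right (h2 l) (hn0 l)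
      have a2 : n l * n l ≤ 4 * (n l - μ) ^ 2 := by nlinarith
      have a3 : 0 ≤ 2 * μ * H l := by have := hH0 l; positivity
      nlinarith [mul_le_mul_of_nonneg_left a2 hXc]
  have hQ : (0:ℝ) < (q : ℝ) ^ (2 * i) := by positivity
  refine le_of_mul_le_mul_left ?_ hQ
  calc _ ≤ _ := h1
    _ ≤ _ := h7
    _ ≤ 2 * μ * ((q : ℝ) ^ (2 * i) * (P.card : ℝ) ^ 2) + 4 * X.card *
        (2 * P.card * ((q : ℝ) ^ (2 * i) * (q : ℝ) ^ (2 * r - i - 1))) := by gcongr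
    _ = _ := by rw [hμ, ← hPc]; ring

/-- the part of `A` in a residue class -/
noncomputable def cls (I : ℕ → Ideal R) (i : ℕ) (A : Finset R) (g : R ⧸ I i) : Finset R :=
  A.filter (fun x => Ideal.Quotient.mk (I i) x = g)

theorem class_sum (i : ℕ) (A : Finset R) :
    ∑ b ∈ A ×ˢ A, ∑ a ∈ A ×ˢ A, ∑ c ∈ A ×ˢ A, (if KP I i a b c then (1 : ℝ) else 0) =
    ∑ g : R ⧸ I i, ∑ g' : R ⧸ I i, ∑ b ∈ cls I i A g ×ˢ cls I i A g',
      ∑ a ∈ cls I i A g ×ˢ cls I i A g', ∑ c ∈ cls I i A g ×ˢ cls I i A g',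
      (if KP I i a b c then (1 : ℝ) else 0) := by
  rw [← Fintype.sum_prod_type' (f := fun g g' => ∑ b ∈ cls I i A g ×ˢ cls I i A g',
      ∑ a ∈ cls I i A g ×ˢ cls I i A g', ∑ c ∈ cls I i A g ×ˢ cls I i A g',
      (if KP I i a b c then (1 : ℝ) else 0))]
  rw [← Finset.sum_fiberwise (A ×ˢ A) (fun p => (Ideal.Quotient.mk (I i) p.1, Ideal.Quotient.mk (I i) p.2))]
  refine Finset.sum_congr rfl fun g _ => ?_
  have hset : (A ×ˢ A).filter (fun p => (Ideal.Quotient.mk (I i) p.1, Ideal.Quotient.mk (I i) p.2) = g) =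
      cls I i A g.1 ×ˢ cls I i A g.2 := by
    ext p
    simp only [cls, mem_filter, mem_product, Prod.ext_iff]
    tauto
  rw [hset]
  have hsub : cls I i A g.1 ×ˢ cls I i A g.2 ⊆ A ×ˢ A := by
    rw [← hset]; exact filter_subset _ _
  refine Finset.sum_congr rfl fun b hb => ?_
  rw [← hset, mem_filter] at hb
  obtain ⟨hb1, hb2⟩ := hb
  have hcl : ∀ p ∈ A ×ˢ A, p ∉ cls I i A g.1 ×ˢ cls I i A g.2 →
      ¬ (p.1 - b.1 ∈ I i ∧ p.2 - b.2 ∈ I i) := by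
    rintro p hp hp' ⟨h1, h2⟩
    apply hp'
    rw [← hset, mem_filter]
    refine ⟨hp, ?_⟩
    rw [← hb2]
    exact Prod.ext (Ideal.Quotient.eq.2 h1) (Ideal.Quotient.eq.2 h2)
  symm
  rw [← Finset.sum_subset hsub]
  · refine Finset.sum_congr rfl fun a ha => ?_
    rw [← Finset.sum_subset hsub]
    intro c hc hc'
    rw [if_neg]
    intro hK
    exact hcl c hc hc' ⟨hK.2.2.2.1, hK.2.2.2.2.1⟩
  · intro a ha ha'
    apply Finset.sum_eq_zero
    intro c hc
    rw [if_neg]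
    intro hK
    exact hcl a ha ha' ⟨hK.1, hK.2.2.1⟩

theorem cls_sum (i : ℕ) (A : Finset R) : ∑ g : R ⧸ I i, ((cls I i A g).card : ℝ) = A.card := by
  have := Finset.card_eq_sum_card_fiberwise (s := A) (t := univ) (f := fun x => Ideal.Quotient.mk (I i) x)
    (fun _ _ => by simp)
  rw [this]; push_cast; rfl

theorem cls_le (i : ℕ) (A : Finset R) (g : R ⧸ I i) : ((cls I i A g).card : ℝ) ≤ A.card := by
  exact_mod_cast card_le_card (filter_subset _ _)

theorem cls_base (i : ℕ) (A : Finset R) (g : R ⧸ I i) : ∃ x0, ∀ x ∈ cls I i A g, x - x0 ∈ I i := by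
  obtain ⟨x0, rfl⟩ := Ideal.Quotient.mk_surjective g
  refine ⟨x0, fun x hx => ?_⟩
  exact Ideal.Quotient.eq.1 (mem_filter.1 hx).2

theorem VRData.cls_le' (h : VRData R I q r) (i : ℕ) (hi : i ≤ r) (A : Finset R) (g : R ⧸ I i) :
    ((cls I i A g).card : ℝ) ≤ (q : ℝ) ^ (r - i) := by
  obtain ⟨x0, hx0⟩ := cls_base i A g
  have : (cls I i A g).card ≤ q ^ (r - i) := by
    rw [← h.card_coset i hi x0]
    apply card_le_card
    intro x hx
    simpa using hx0 x hx
  exact_mod_cast this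

/-- sum over classes -/
theorem cls_bound (i : ℕ) (A : Finset R) (F : R ⧸ I i → R ⧸ I i → ℝ) (B : ℝ)
    (hF : ∀ g g', F g g' ≤ B * ((cls I i A g).card * (cls I i A g').card)) :
    ∑ g : R ⧸ I i, ∑ g' : R ⧸ I i, F g g' ≤ B * (A.card : ℝ) ^ 2 := by
  calc _ ≤ ∑ g : R ⧸ I i, ∑ g' : R ⧸ I i, B * (((cls I i A g).card : ℝ) * (cls I i A g').card) :=
        Finset.sum_le_sum fun g _ => Finset.sum_le_sum fun g' _ => hF g g'
    _ = B * ((∑ g : R ⧸ I i, ((cls I i A g).card : ℝ)) * ∑ g' : R ⧸ I i, ((cls I i A g').card : ℝ)) := by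
        rw [Finset.sum_mul_sum, Finset.mul_sum]
        simp only [Finset.mul_sum]
    _ = _ := by rw [cls_sum]; ring

theorem VRData.level_zero (h : VRData R I q r) (A : Finset R) :
    ∑ b ∈ A ×ˢ A, ∑ a ∈ A ×ˢ A, ∑ c ∈ A ×ˢ A, (if KP I 0 a b c then (1 : ℝ) else 0) ≤
      2 * ((A.card : ℝ) ^ 6 / (q : ℝ) ^ r) + 8 * ((q : ℝ) ^ (2 * r - 1) * (A.card : ℝ) ^ 3) := by
  have := h.core 0 (by omega) h.r_pos A A 0 0 (by simp [h.zero]) (by simp [h.zero])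
  refine this.trans (le_of_eq ?_)
  simp only [mul_zero, pow_zero, Nat.sub_zero]
  ring

theorem VRData.level_pos (h : VRData R I q r) (i : ℕ) (hi : i < r) (A : Finset R) :
    ∑ b ∈ A ×ˢ A, ∑ a ∈ A ×ˢ A, ∑ c ∈ A ×ˢ A, (if KP I i a b c then (1 : ℝ) else 0) ≤
      10 * (q : ℝ) ^ (2 * r - i) * (A.card : ℝ) ^ 3 := by
  have hq2 : (2:ℝ) ≤ q := by exact_mod_cast h.two_le
  have hq0 : (0:ℝ) < q := by linarith
  rw [class_sum]
  have hA : (0:ℝ) ≤ A.card := by positivity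
  refine (cls_bound i A _ (10 * (q : ℝ) ^ (2 * r - i) * (A.card : ℝ)) ?_).trans (le_of_eq (by ring))
  intro g g'
  set X := cls I i A g with hX
  set Y := cls I i A g' with hY
  have x1 : (X.card : ℝ) ≤ A.card := cls_le i A g
  have y1 : (Y.card : ℝ) ≤ A.card := cls_le i A g'
  have x2 : (X.card : ℝ) ≤ (q : ℝ) ^ (r - i) := h.cls_le' i hi.le A g
  have y2 : (Y.card : ℝ) ≤ (q : ℝ) ^ (r - i) := h.cls_le' i hi.le A g'
  have hx : (0:ℝ) ≤ X.card := by positivity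
  have hy : (0:ℝ) ≤ Y.card := by positivity
  set G := (q : ℝ) ^ (r - i) with hG
  have hG0 : 0 ≤ G := by positivity
  have h3 : ((X.card : ℝ) * Y.card) ^ 3 ≤ A.card * G ^ 3 * (X.card * Y.card) := by
    have : ((X.card : ℝ) * X.card) * (Y.card * Y.card) ≤ (A.card * G) * (G * G) := by gcongr
    calc ((X.card : ℝ) * Y.card) ^ 3 = ((X.card : ℝ) * X.card) * (Y.card * Y.card) * (X.card * Y.card) := by ring
      _ ≤ (A.card * G) * (G * G) * (X.card * Y.card) := by gcongr
      _ = _ := by ring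
  rcases le_or_gt (2 * i) r with h2 | h2
  · obtain ⟨x0, hx0⟩ := cls_base i A g
    obtain ⟨y0, hy0⟩ := cls_base i A g'
    refine (h.core i h2 hi X Y x0 y0 hx0 hy0).trans ?_
    have e1 : (q : ℝ) ^ (2 * i) / (q : ℝ) ^ r * G ^ 3 = (q : ℝ) ^ (2 * r - i) := by
      rw [hG, div_mul_eq_mul_div, div_eq_iff (by positivity), ← pow_mul, ← pow_add, ← pow_add]
      congr 1; omega
    have e2 : (q : ℝ) ^ (2 * r - i - 1) ≤ (q : ℝ) ^ (2 * r - i) :=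
      pow_le_pow_right₀ (by linarith) (by omega)
    calc _ ≤ 2 * ((q : ℝ) ^ (2 * i) / (q : ℝ) ^ r) * (A.card * G ^ 3 * (X.card * Y.card)) +
          8 * A.card * (X.card * Y.card) * (q : ℝ) ^ (2 * r - i) := by gcongr
      _ = 2 * ((q : ℝ) ^ (2 * i) / (q : ℝ) ^ r * G ^ 3) * A.card * (X.card * Y.card) +
          8 * A.card * (X.card * Y.card) * (q : ℝ) ^ (2 * r - i) := by ring
      _ = _ := by rw [e1]; ring
  · have e1 : G ^ 3 ≤ (q : ℝ) ^ (2 * r - i) := by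
      rw [hG, ← pow_mul]
      exact pow_le_pow_right₀ (by linarith) (by omega)
    calc _ ≤ ∑ b ∈ X ×ˢ Y, ∑ a ∈ X ×ˢ Y, ∑ c ∈ X ×ˢ Y, (1 : ℝ) := by
          gcongr; split_ifs <;> simp
      _ = ((X.card : ℝ) * Y.card) ^ 3 := by
          simp only [sum_const, nsmul_eq_mul, card_product]; push_cast; ring
      _ ≤ A.card * G ^ 3 * (X.card * Y.card) := h3
      _ ≤ A.card * (q : ℝ) ^ (2 * r - i) * (X.card * Y.card) := by gcongr
      _ ≤ _ := by
        have : 0 ≤ A.card * (q : ℝ) ^ (2 * r - i) * (X.card * Y.card) := by positivity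
        linarith

theorem VRData.total (h : VRData R I q r) (A : Finset R) :
    ∑ i ∈ range r, ∑ b ∈ A ×ˢ A, ∑ a ∈ A ×ˢ A, ∑ c ∈ A ×ˢ A, (if KP I i a b c then (1 : ℝ) else 0) ≤
      2 * ((A.card : ℝ) ^ 6 / (q : ℝ) ^ r) + 28 * ((q : ℝ) ^ (2 * r - 1) * (A.card : ℝ) ^ 3) := by
  have hr := h.r_pos
  have e : range r = insert 0 (Ioc 0 (r - 1)) := by ext i; simp; omega
  rw [e, sum_insert (by simp)]
  have h0 := h.level_zero A
  have h1 : ∑ i ∈ Ioc 0 (r - 1), ∑ b ∈ A ×ˢ A, ∑ a ∈ A ×ˢ A, ∑ c ∈ A ×ˢ A,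
      (if KP I i a b c then (1 : ℝ) else 0) ≤ ∑ i ∈ Ioc 0 (r - 1), 10 * (q : ℝ) ^ (2 * r - i) * (A.card : ℝ) ^ 3 :=
    Finset.sum_le_sum fun i hi => h.level_pos i (by rw [mem_Ioc] at hi; omega) A
  rw [← Finset.sum_mul, ← Finset.mul_sum] at h1
  have h2 := geom_aux q h.two_le (2 * r) 0 (r - 1) (by omega)
  rw [Nat.sub_zero] at h2
  have h3 : (0:ℝ) ≤ (A.card : ℝ) ^ 3 := by positivity
  nlinarith [mul_le_mul_of_nonneg_right h2 h3]

/-- the nondegenerate collinearity predicate -/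
def NP (a b c : R × R) : Prop :=
  a.1 ≠ b.1 ∧ c.1 ≠ b.1 ∧ a.2 ≠ b.2 ∧ c.2 ≠ b.2 ∧
    (a.1 - b.1) * (c.2 - b.2) = (a.2 - b.2) * (c.1 - b.1)

theorem VRData.cover (h : VRData R I q r) (a b c : R × R) (hN : NP a b c) :
    ∃ i < r, KP I i a b c ∨ KP I i c b a ∨ KP I i a.swap b.swap c.swap ∨ KP I i c.swap b.swap a.swap := by
  obtain ⟨n1, n2, n3, n4, n5⟩ := hN
  set Q : ℕ → Prop := fun i => a.1 - b.1 ∈ I i ∧ a.2 - b.2 ∈ I i ∧ c.1 - b.1 ∈ I i ∧ c.2 - b.2 ∈ I i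
  have hQr : ¬ Q r := by
    rintro ⟨h1, -⟩
    rw [h.last, Ideal.mem_bot, sub_eq_zero] at h1
    exact n1 h1
  have hQ0 : Q 0 := by simp [Q, h.zero]
  have : ∃ i < r, Q i ∧ ¬ Q (i + 1) := by
    by_contra hcon
    push Not at hcon
    have : ∀ j ≤ r, Q j := by
      intro j
      induction j with
      | zero => intro _; exact hQ0
      | succ k ih => intro hk; exact hcon k (by omega) (ih (by omega))
    exact hQr (this r le_rfl)
  obtain ⟨i, hir, ⟨q1, q2, q3, q4⟩, hq⟩ := this
  refine ⟨i, hir, ?_⟩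
  have hq' : a.1 - b.1 ∉ I (i+1) ∨ a.2 - b.2 ∉ I (i+1) ∨ c.1 - b.1 ∉ I (i+1) ∨ c.2 - b.2 ∉ I (i+1) := by
    by_contra hcon; push Not at hcon; exact hq hcon
  simp only [KP, Prod.fst_swap, Prod.snd_swap]
  rcases hq' with g | g | g | g
  · exact Or.inl ⟨q1, g, q2, q3, q4, n5⟩
  · exact Or.inr (Or.inr (Or.inl ⟨q2, g, q1, q4, q3, n5.symm⟩))
  · exact Or.inr (Or.inl ⟨q3, g, q4, q1, q2, by rw [mul_comm, ← n5, mul_comm]⟩)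
  · exact Or.inr (Or.inr (Or.inr ⟨q4, g, q3, q2, q1, by rw [mul_comm, n5, mul_comm]⟩))

theorem sum_swap (A : Finset R) (f : R × R → ℝ) :
    ∑ p ∈ A ×ˢ A, f p.swap = ∑ p ∈ A ×ˢ A, f p := by
  refine Finset.sum_bij' (fun p _ => p.swap) (fun p _ => p.swap) ?_ ?_ ?_ ?_ ?_ <;>
    simp +contextual [mem_product]

theorem VRData.final (h : VRData R I q r) (A : Finset R) :
    ∑ b ∈ A ×ˢ A, ∑ a ∈ A ×ˢ A, ∑ c ∈ A ×ˢ A, (if NP a b c then (1 : ℝ) else 0) ≤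
      112 * ((A.card : ℝ) ^ 6 / (q : ℝ) ^ r + (q : ℝ) ^ (2 * r - 1) * (A.card : ℝ) ^ 3) := by
  let K : R × R → R × R → R × R → ℝ := fun a b c => ∑ i ∈ range r, (if KP I i a b c then (1 : ℝ) else 0)
  have hK0 : ∀ a b c, 0 ≤ K a b c := fun a b c =>
    Finset.sum_nonneg fun i _ => by split_ifs <;> simp
  have hK1 : ∀ a b c, ∀ i < r, KP I i a b c → 1 ≤ K a b c := by
    intro a b c i hi hk
    have := Finset.single_le_sum (s := range r) (f := fun i => if KP I i a b c then (1 : ℝ) else 0)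
      (fun i _ => by positivity) (mem_range.2 hi)
    simp only [if_pos hk] at this
    exact this
  have hpt : ∀ a b c, (if NP a b c then (1 : ℝ) else 0) ≤
      K a b c + K c b a + K a.swap b.swap c.swap + K c.swap b.swap a.swap := by
    intro a b c
    have p1 := hK0 a b c
    have p2 := hK0 c b a
    have p3 := hK0 a.swap b.swap c.swap
    have p4 := hK0 c.swap b.swap a.swap
    split_ifs with hN
    · obtain ⟨i, hi, g | g | g | g⟩ := h.cover a b c hN <;>
      · have := hK1 _ _ _ i hi g
        linarith
    · linarith
  set S := ∑ b ∈ A ×ˢ A, ∑ a ∈ A ×ˢ A, ∑ c ∈ A ×ˢ A, K a b c with hS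
  have hS1 : S ≤ 2 * ((A.card : ℝ) ^ 6 / (q : ℝ) ^ r) + 28 * ((q : ℝ) ^ (2 * r - 1) * (A.card : ℝ) ^ 3) := by
    refine le_trans (le_of_eq ?_) (h.total A)
    symm
    rw [hS, Finset.sum_comm]
    refine Finset.sum_congr rfl fun b _ => ?_
    rw [Finset.sum_comm]
    refine Finset.sum_congr rfl fun a _ => ?_
    exact Finset.sum_comm
  have s2 : ∑ b ∈ A ×ˢ A, ∑ a ∈ A ×ˢ A, ∑ c ∈ A ×ˢ A, K c b a = S :=
    Finset.sum_congr rfl fun b _ => Finset.sum_comm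
  have s3 : ∑ b ∈ A ×ˢ A, ∑ a ∈ A ×ˢ A, ∑ c ∈ A ×ˢ A, K a.swap b.swap c.swap = S := by
    rw [hS, ← sum_swap]
    refine Finset.sum_congr rfl fun b _ => ?_
    rw [← sum_swap]
    refine Finset.sum_congr rfl fun a _ => ?_
    rw [← sum_swap]
    simp
  have s4 : ∑ b ∈ A ×ˢ A, ∑ a ∈ A ×ˢ A, ∑ c ∈ A ×ˢ A, K c.swap b.swap a.swap = S := by
    rw [← s3]
    exact Finset.sum_congr rfl fun b _ => Finset.sum_comm
  have : ∑ b ∈ A ×ˢ A, ∑ a ∈ A ×ˢ A, ∑ c ∈ A ×ˢ A, (if NP a b c then (1 : ℝ) else 0) ≤ 4 * S := by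
    calc _ ≤ ∑ b ∈ A ×ˢ A, ∑ a ∈ A ×ˢ A, ∑ c ∈ A ×ˢ A,
        (K a b c + K c b a + K a.swap b.swap c.swap + K c.swap b.swap a.swap) :=
          Finset.sum_le_sum fun b _ => Finset.sum_le_sum fun a _ => Finset.sum_le_sum fun c _ => hpt a b c
      _ = S + S + S + S := by
          simp only [Finset.sum_add_distrib, s2, s3, s4]; rfl
      _ = _ := by ring
  have hp : 0 ≤ (A.card : ℝ) ^ 6 / (q : ℝ) ^ r := by positivity
  linarith

theorem count_eq (A : Finset R) (D : DecidablePred (fun t : R × R × R × R × R × R => t.1 ≠ t.2.1 ∧ t.2.2.1 ≠ t.2.1 ∧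
                t.2.2.2.1 ≠ t.2.2.2.2.1 ∧ t.2.2.2.2.2 ≠ t.2.2.2.2.1 ∧
                (t.1 - t.2.1) * (t.2.2.2.2.2 - t.2.2.2.2.1) =
                  (t.2.2.2.1 - t.2.2.2.2.1) * (t.2.2.1 - t.2.1))) :
    ((@Finset.filter _ (fun t => t.1 ≠ t.2.1 ∧ t.2.2.1 ≠ t.2.1 ∧
                t.2.2.2.1 ≠ t.2.2.2.2.1 ∧ t.2.2.2.2.2 ≠ t.2.2.2.2.1 ∧
                (t.1 - t.2.1) * (t.2.2.2.2.2 - t.2.2.2.2.1) =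
                  (t.2.2.2.1 - t.2.2.2.2.1) * (t.2.2.1 - t.2.1)) D (A ×ˢ A ×ˢ A ×ˢ A ×ˢ A ×ˢ A)).card : ℝ) =
    ∑ b ∈ A ×ˢ A, ∑ a ∈ A ×ˢ A, ∑ c ∈ A ×ˢ A, (if NP a b c then (1 : ℝ) else 0) := by
  have : ∑ b ∈ A ×ˢ A, ∑ a ∈ A ×ˢ A, ∑ c ∈ A ×ˢ A, (if NP a b c then (1 : ℝ) else 0) =
      ∑ t ∈ (A ×ˢ A) ×ˢ ((A ×ˢ A) ×ˢ (A ×ˢ A)), (if NP t.2.1 t.1 t.2.2 then (1 : ℝ) else 0) := by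
    refine Eq.trans ?_ (Finset.sum_product (A ×ˢ A) ((A ×ˢ A) ×ˢ (A ×ˢ A))
      (fun t => if NP t.2.1 t.1 t.2.2 then (1 : ℝ) else 0)).symm
    refine Finset.sum_congr rfl fun b _ => ?_
    exact (Finset.sum_product (A ×ˢ A) (A ×ˢ A)
      (fun t => if NP t.1 b t.2 then (1 : ℝ) else 0)).symm
  rw [this, Finset.sum_boole]
  congr 1
  refine Finset.card_bij' (fun t _ => ((t.2.1, t.2.2.2.2.1), ((t.1, t.2.2.2.1), (t.2.2.1, t.2.2.2.2.2))))
    (fun t _ => (t.2.1.1, t.1.1, t.2.2.1, t.2.1.2, t.1.2, t.2.2.2)) ?_ ?_ ?_ ?_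
  · intro t ht
    simp only [mem_filter, mem_product] at ht ⊢
    unfold NP at *
    tauto
  · intro t ht
    simp only [mem_filter, mem_product] at ht ⊢
    unfold NP at *
    tauto
  · intro t _; rfl
  · intro t _; rfl

end Core


/-- (Collinear triples bound.) There is an absolute constant `C > 0`
such that: for any finite valuation ring `R` of order `q ^ r` with `q` odd and any
`A ⊆ R`, the number of six-tuples `(a, b, c, a', b', c') ∈ A⁶` with `a ≠ b`, `c ≠ b`,
`a' ≠ b'`, `c' ≠ b'` and `(a − b)(c' − b') = (a' − b')(c − b)` is at most
`C * (|A|⁶ / q^r + q^(2r-1) * |A|³)`. -/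
theorem stmt_9 :
    ∃ C : ℝ, 0 < C ∧
      ∀ (R : Type) [CommRing R] [Fintype R] [DecidableEq R] [Nontrivial R]
        [IsLocalRing R] [IsPrincipalIdealRing R]
        (q r : ℕ),
        Nat.card (IsLocalRing.ResidueField R) = q →
        Odd q →
        IsLocalRing.maximalIdeal R ^ r = ⊥ →
        (∀ k < r, IsLocalRing.maximalIdeal R ^ k ≠ ⊥) →
        Fintype.card R = q ^ r →
        ∀ A : Finset R,
          (((A ×ˢ A ×ˢ A ×ˢ A ×ˢ A ×ˢ A).filter
              (fun t => t.1 ≠ t.2.1 ∧ t.2.2.1 ≠ t.2.1 ∧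
                t.2.2.2.1 ≠ t.2.2.2.2.1 ∧ t.2.2.2.2.2 ≠ t.2.2.2.2.1 ∧
                (t.1 - t.2.1) * (t.2.2.2.2.2 - t.2.2.2.2.1) =
                  (t.2.2.2.1 - t.2.2.2.2.1) * (t.2.2.1 - t.2.1))).card : ℝ) ≤
            C * ((A.card : ℝ) ^ 6 / (q : ℝ) ^ r + (q : ℝ) ^ (2 * r - 1) * (A.card : ℝ) ^ 3) := by
  refine ⟨112, by norm_num, ?_⟩
  intro R _ _ _ _ _ _ q r hq _ hr hk hc A
  have h := vrdata R q r hq hr hk hc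
  rw [count_eq]
  exact h.final A
end

section
/- Let R be a finite commutative ring and A ⊆ R a finite nonempty subset. Let E denote the number of pairs of triples ((x, y, z), (x', y', z')) with x, x' ∈ A + A and y, z, y', z' ∈ A such that (x − z)^2 + y^2 = (x' − z')^2 + y'^2. Then |A|^6 ≤ |A^2 + A^2| · E. -/
open Finset Pointwise

theorem cs_aux {α β : Type*} [DecidableEq α] [DecidableEq β] (P : Finset α) (T : Finset β)
    (f : α → β) (hf : ∀ p ∈ P, f p ∈ T) :
    P.card ^ 2 ≤ T.card * ((P ×ˢ P).filter (fun t => f t.1 = f t.2)).card := by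
  have h1 : P.card = ∑ t ∈ T, (P.filter (fun p => f p = t)).card :=
    Finset.card_eq_sum_card_fiberwise (fun p hp => hf p hp)
  have h2 : ((P ×ˢ P).filter (fun t => f t.1 = f t.2)).card
      = ∑ t ∈ T, (P.filter (fun p => f p = t)).card ^ 2 := by
    rw [Finset.card_eq_sum_card_fiberwise (f := fun q : α × α => f q.1) (t := T)]
    · refine Finset.sum_congr rfl fun t _ => ?_
      rw [sq, ← Finset.card_product]
      congr 1
      ext ⟨a, b⟩
      simp only [Finset.mem_filter, Finset.mem_product]
      grind
    · intro q hq
      simp only [Finset.coe_filter, Finset.mem_product, Set.mem_setOf_eq] at hq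
      exact hf _ hq.1.1
  rw [h2, h1]
  exact sq_sum_le_card_mul_sum_sq

/-- Let `R` be a finite commutative ring and `A ⊆ R` finite nonempty.
Let `E` be the number of pairs of triples `((x,y,z), (x',y',z'))` with `x, x' ∈ A + A`
and `y, z, y', z' ∈ A` such that `(x−z)² + y² = (x'−z')² + y'²`. Then
`|A|⁶ ≤ |A² + A²| * E`. -/
theorem stmt_10 {R : Type*} [CommRing R] [Fintype R] [DecidableEq R]
    (A : Finset R) (hA : A.Nonempty) :
    A.card ^ 6 ≤
      (A.image (fun x => x ^ 2) + A.image (fun x => x ^ 2)).card *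
        ((((A + A) ×ˢ A ×ˢ A) ×ˢ ((A + A) ×ˢ A ×ˢ A)).filter
          (fun t => (t.1.1 - t.1.2.2) ^ 2 + t.1.2.1 ^ 2 =
            (t.2.1 - t.2.2.2) ^ 2 + t.2.2.1 ^ 2)).card := by
  have hinj : Function.Injective (fun p : R × R × R => (p.1 + p.2.2, p.2.1, p.2.2)) := by
    rintro ⟨a, b, c⟩ ⟨a', b', c'⟩ h
    simp only [Prod.mk.injEq] at h
    obtain ⟨h1, h2, h3⟩ := h
    subst h2 h3
    simpa using h1
  set P := (A ×ˢ A ×ˢ A).image (fun p : R × R × R => (p.1 + p.2.2, p.2.1, p.2.2)) with hP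
  have hc : P.card = A.card ^ 3 := by
    rw [hP, Finset.card_image_of_injective _ hinj, Finset.card_product, Finset.card_product]
    ring
  have hsub : P ⊆ (A + A) ×ˢ A ×ˢ A := by
    intro p hp
    rw [hP, Finset.mem_image] at hp
    obtain ⟨⟨a, b, c⟩, h, rfl⟩ := hp
    simp only [Finset.mem_product] at h ⊢
    exact ⟨Finset.add_mem_add h.1 h.2.2, h.2.1, h.2.2⟩
  have key := cs_aux P (A.image (fun x => x ^ 2) + A.image (fun x => x ^ 2))
    (fun p => (p.1 - p.2.2) ^ 2 + p.2.1 ^ 2) (by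
      intro p hp
      rw [hP, Finset.mem_image] at hp
      obtain ⟨⟨a, b, c⟩, h, rfl⟩ := hp
      simp only [Finset.mem_product] at h
      simp only [add_sub_cancel_right]
      exact Finset.add_mem_add (Finset.mem_image_of_mem _ h.1)
        (Finset.mem_image_of_mem _ h.2.1))
  rw [hc, ← pow_mul] at key
  refine key.trans (Nat.mul_le_mul_left _ (Finset.card_le_card ?_))
  exact Finset.filter_subset_filter _ (Finset.product_subset_product hsub hsub)
end
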